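/- arXiv:1805.08196 — 2 statements merged into one kernel-verified Lean document; each statement's English description precedes it below -/
import Mathlib

section
/- (Theorem 1: Rademacher-based generalization bound for the CRF loss) Let D be a probability distribution over pairs (x,y) with y ∈ Y(x), where each finite output set satisfies |Y(x)| ≤ r, and let φ(x,y) ∈ ℝ^d be a feature map. Let 𝒲 be the set of w ∈ ℝ^d with at most s nonzero coordinates, and let β(m,w) > 0 be any positive temperature. Define the expected loss L(w,D) = E_{(x,y)∼D}[1 − q(y; x, w)] and, for a sample S = {(x_i,y_i)}_{i=1}^m drawn i.i.d. from D, the empirical CRF loss L(w,S) = (1/m)∑_i (1 − q(y_i; x_i, w)). Then for any δ ∈ (0,1), with probability at least 1 − δ over the choice of S ∼ D^m, simultaneously for all w ∈ 𝒲: L(w,D) ≤ L(w,S) + 2√(s(ln d + 2 ln(mr))/m) + 3√(ln(2/δ)/(2m)). -/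
open Real MeasureTheory Finset

/-- Linear score `⟨φ(x,y), w⟩`. -/
noncomputable def linScore {Y : Type*} {d : ℕ} (φ : Y → Fin d → ℝ)
    (w : Fin d → ℝ) (y : Y) : ℝ :=
  ∑ j, φ y j * w j

/-- Softmax probability of `y` with scores `s`, temperature `β`, over `A`. -/
noncomputable def softmaxProb {Y : Type*} (s : Y → ℝ) (β : ℝ)
    (A : Finset Y) (y : Y) : ℝ :=
  exp (s y / β) / ∑ y' ∈ A, exp (s y' / β)

open ProbabilityTheory

/-- The sign `±1` encoded by a Boolean. -/
def boolSign (b : Bool) : ℝ := if b then 1 else -1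

/-- The sum over all sign vectors of the exponential Rademacher supremum of a finite family. -/
noncomputable def expRademacher {ι : Type*} {m : ℕ} (h : ι → Fin m → ℝ) (c : ℝ) : ℝ :=
  ∑ σ : Fin m → Bool, ⨆ k, exp (c * ∑ i, boolSign (σ i) * h k i)

lemma abs_boolSign (b : Bool) : |boolSign b| = 1 := by
  cases b <;> simp [boolSign]

lemma sum_exp_boolSign_le {m : ℕ} (c : ℝ) (b : Fin m → ℝ) (hb : ∀ i, |b i| ≤ 1 / 2) :
    ∑ σ : Fin m → Bool, exp (c * ∑ i, boolSign (σ i) * b i) ≤ 2 ^ m * exp (c ^ 2 * m / 8) := by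
  have h1 : ∀ σ : Fin m → Bool, exp (c * ∑ i, boolSign (σ i) * b i)
      = ∏ i, exp (c * (boolSign (σ i) * b i)) := by
    intro σ
    rw [Finset.mul_sum, Real.exp_sum]
  simp_rw [h1]
  have h2 := Finset.prod_univ_sum (fun _ : Fin m => (Finset.univ : Finset Bool))
    (fun i x => exp (c * (boolSign x * b i)))
  rw [Fintype.piFinset_univ] at h2
  rw [← h2]
  calc ∏ i, ∑ x : Bool, exp (c * (boolSign x * b i))
      ≤ ∏ _i : Fin m, (2 * exp (c ^ 2 / 8)) := by
        refine Finset.prod_le_prod (fun i _ => by positivity) fun i _ => ?_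
        have h3 : ∑ x : Bool, exp (c * (boolSign x * b i)) = 2 * cosh (c * b i) := by
          rw [Real.cosh_eq]
          simp [boolSign]
          ring_nf
        rw [h3]
        have h4 : (c * b i) ^ 2 / 2 ≤ c ^ 2 / 8 := by
          have : (b i) ^ 2 ≤ (1 / 2) ^ 2 := sq_le_sq' (by linarith [(abs_le.1 (hb i)).1])
            (abs_le.1 (hb i)).2
          nlinarith [sq_nonneg c]
        have := (Real.cosh_le_exp_half_sq (c * b i)).trans (Real.exp_le_exp.2 h4)
        linarith
    _ = 2 ^ m * exp (c ^ 2 * m / 8) := by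
        rw [Finset.prod_const, Finset.card_univ, Fintype.card_fin, mul_pow, ← Real.exp_nat_mul]
        ring_nf

lemma expRademacher_le_of_finite_range {ι : Type*} [Nonempty ι] {m : ℕ}
    (h : ι → Fin m → ℝ) (c : ℝ) (B : Finset (Fin m → ℝ)) (hB : ∀ k, h k ∈ B)
    (hb : ∀ b ∈ B, ∀ i, |b i| ≤ 1 / 2) :
    expRademacher h c ≤ #B * (2 ^ m * exp (c ^ 2 * m / 8)) := by
  calc expRademacher h c
      ≤ ∑ σ : Fin m → Bool, ∑ b ∈ B, exp (c * ∑ i, boolSign (σ i) * b i) := by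
        refine Finset.sum_le_sum fun σ _ => ciSup_le fun k => ?_
        exact Finset.single_le_sum (f := fun b : Fin m → ℝ =>
          exp (c * ∑ i, boolSign (σ i) * b i)) (fun _ _ => (exp_pos _).le) (hB k)
    _ = ∑ b ∈ B, ∑ σ : Fin m → Bool, exp (c * ∑ i, boolSign (σ i) * b i) := Finset.sum_comm
    _ ≤ ∑ _b ∈ B, 2 ^ m * exp (c ^ 2 * m / 8) :=
        Finset.sum_le_sum fun b hbB => sum_exp_boolSign_le c b (hb b hbB)
    _ = _ := by rw [Finset.sum_const, nsmul_eq_mul]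

lemma integrable_of_measurable_of_abs_le {Ω : Type*} [MeasurableSpace Ω] {ν : Measure Ω}
    [IsFiniteMeasure ν] {f : Ω → ℝ} (hf : Measurable f) {C : ℝ} (hC : ∀ ω, |f ω| ≤ C) :
    Integrable f ν :=
  Integrable.of_bound hf.aestronglyMeasurable C (ae_of_all _ hC)

lemma exp_integral_le {Ω : Type*} [MeasurableSpace Ω] {ν : Measure Ω}
    [IsProbabilityMeasure ν] {f : Ω → ℝ} (hf : Measurable f) {C : ℝ} (hC : ∀ ω, |f ω| ≤ C) :
    exp (∫ ω, f ω ∂ν) ≤ ∫ ω, exp (f ω) ∂ν := by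
  refine convexOn_exp.map_integral_le continuous_exp.continuousOn isClosed_univ
    (ae_of_all _ fun _ => Set.mem_univ _) (integrable_of_measurable_of_abs_le hf hC) ?_
  refine integrable_of_measurable_of_abs_le (C := exp C) (measurable_exp.comp hf) fun ω => ?_
  rw [Function.comp, abs_of_pos (exp_pos _)]
  exact exp_le_exp.2 ((le_abs_self _).trans (hC ω))

lemma abs_signed_sum_le {m : ℕ} (c : ℝ) (σ : Fin m → Bool) (b : Fin m → ℝ) {C : ℝ}
    (hb : ∀ i, |b i| ≤ C) : |c * ∑ i, boolSign (σ i) * b i| ≤ |c| * (m * C) := by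
  rw [abs_mul]
  refine mul_le_mul_of_nonneg_left ?_ (abs_nonneg _)
  refine (Finset.abs_sum_le_sum_abs _ _).trans ?_
  calc ∑ i, |boolSign (σ i) * b i| ≤ ∑ _i : Fin m, C :=
        Finset.sum_le_sum fun i _ => by rw [abs_mul, abs_boolSign, one_mul]; exact hb i
    _ = m * C := by simp

lemma abs_iSup_exp_le {ι : Type*} [Finite ι] [Nonempty ι] {f : ι → ℝ} {C : ℝ}
    (hf : ∀ k, |f k| ≤ C) : |⨆ k, exp (f k)| ≤ exp C := by
  rw [abs_of_nonneg (Real.iSup_nonneg fun k => (exp_pos _).le)]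
  exact ciSup_le fun k => exp_le_exp.2 ((le_abs_self _).trans (hf k))

lemma iSup_exp_integral_le {ι : Type*} [Finite ι] [Nonempty ι] {Ω : Type*} [MeasurableSpace Ω]
    {ν : Measure Ω} [IsProbabilityMeasure ν] {f : ι → Ω → ℝ} (hf : ∀ k, Measurable (f k))
    {C : ℝ} (hC : ∀ k ω, |f k ω| ≤ C) :
    ⨆ k, exp (∫ ω, f k ω ∂ν) ≤ ∫ ω, ⨆ k, exp (f k ω) ∂ν := by
  refine ciSup_le fun k => (exp_integral_le (hf k) (hC k)).trans ?_
  refine integral_mono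
    (integrable_of_measurable_of_abs_le (C := exp C) (measurable_exp.comp (hf k)) fun ω => ?_)
    (integrable_of_measurable_of_abs_le (C := exp C)
      (Measurable.iSup fun k => measurable_exp.comp (hf k)) fun ω =>
      abs_iSup_exp_le fun k => hC k ω) fun ω => ?_
  · rw [abs_of_pos (exp_pos _)]
    exact exp_le_exp.2 ((le_abs_self _).trans (hC k ω))
  · exact le_ciSup (f := fun k => exp (f k ω)) (Set.finite_range _).bddAbove k

lemma expRademacher_integral_le {ι : Type*} [Finite ι] [Nonempty ι] {m : ℕ} {Ω : Type*}
    [MeasurableSpace Ω] {ν : Measure Ω} [IsProbabilityMeasure ν] {H : Ω → ι → Fin m → ℝ}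
    (hH : ∀ k i, Measurable fun ω => H ω k i) {C : ℝ} (hC : ∀ ω k i, |H ω k i| ≤ C)
    {c K : ℝ} (hK : ∀ ω, expRademacher (H ω) c ≤ K) :
    expRademacher (fun k i => ∫ ω, H ω k i ∂ν) c ≤ K := by
  have hmeas : ∀ (σ : Fin m → Bool) k,
      Measurable fun ω => c * ∑ i, boolSign (σ i) * H ω k i := fun σ k =>
    (Finset.measurable_sum _ fun i _ => (hH k i).const_mul _).const_mul _
  have hint : ∀ σ : Fin m → Bool, Integrable
      (fun ω => ⨆ k, exp (c * ∑ i, boolSign (σ i) * H ω k i)) ν := fun σ =>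
    integrable_of_measurable_of_abs_le (C := exp (|c| * (m * C)))
      (Measurable.iSup fun k => measurable_exp.comp (hmeas σ k)) fun ω =>
      abs_iSup_exp_le fun k => abs_signed_sum_le c σ _ (hC ω k)
  calc expRademacher (fun k i => ∫ ω, H ω k i ∂ν) c
      ≤ ∑ σ : Fin m → Bool, ∫ ω, ⨆ k, exp (c * ∑ i, boolSign (σ i) * H ω k i) ∂ν := by
        refine Finset.sum_le_sum fun σ _ => ?_
        refine le_trans (le_of_eq ?_) (iSup_exp_integral_le (hmeas σ)
          fun k ω => abs_signed_sum_le c σ _ (hC ω k))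
        congr! 3 with k
        rw [integral_const_mul, integral_finsetSum]
        · simp_rw [integral_const_mul]
        · exact fun i _ => (integrable_of_measurable_of_abs_le (hH k i)
            fun ω => hC ω k i).const_mul _
    _ = ∫ ω, expRademacher (H ω) c ∂ν := (integral_finsetSum _ fun σ _ => hint σ).symm
    _ ≤ ∫ _ω, K ∂ν := integral_mono (integrable_finsetSum _ fun σ _ => hint σ)
        (integrable_const _) hK
    _ = K := by simp
section Symmetrization

variable {Z : Type*} [MeasurableSpace Z] {D : Measure Z} [IsProbabilityMeasure D] {m : ℕ}
  {ι : Type*} [Finite ι] [Nonempty ι] {g : ι → Z → ℝ}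

lemma integrable_iSup_exp {T : Type*} [MeasurableSpace T] {μ : Measure T} [IsFiniteMeasure μ]
    {f : ι → T → ℝ} (hf : ∀ k, Measurable (f k)) {C : ℝ} (hC : ∀ k ω, |f k ω| ≤ C) :
    Integrable (fun ω => ⨆ k, exp (f k ω)) μ :=
  integrable_of_measurable_of_abs_le (C := exp C)
    (Measurable.iSup fun k => measurable_exp.comp (hf k)) fun ω => abs_iSup_exp_le fun k => hC k ω

lemma measurable_signed_sum {T : Type*} [MeasurableSpace T] (c : ℝ) (σ : Fin m → Bool)
    {f : Fin m → T → ℝ} (hf : ∀ i, Measurable (f i)) :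
    Measurable fun t => c * ∑ i, boolSign (σ i) * f i t :=
  (Finset.measurable_sum _ fun i _ => (hf i).const_mul _).const_mul _

lemma boolSign_not (b : Bool) : boolSign (!b) = -boolSign b := by
  cases b <;> simp [boolSign]

lemma sum_not_eq {M : Type*} [AddCommMonoid M] (F : (Fin m → Bool) → M) :
    ∑ σ : Fin m → Bool, F (fun i => !(σ i)) = ∑ σ : Fin m → Bool, F σ := by
  have hinv : Function.Involutive fun (σ : Fin m → Bool) (i : Fin m) => !(σ i) :=
    fun σ => by funext i; simp
  exact Equiv.sum_comp (Function.Involutive.toPerm _ hinv) F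

/-- Symmetrization on the doubled sample: an increment of paired coordinates is dominated by an
average of signed sums. -/
lemma two_pow_mul_integral_iSup_exp_sub_le (hg : ∀ k, Measurable (g k)) {C : ℝ}
    (hC : ∀ k z, |g k z| ≤ C) (c : ℝ) {K : ℝ}
    (hK : ∀ᵐ S ∂(Measure.pi fun _ : Fin m => D), expRademacher (fun k i => g k (S i)) (2 * c) ≤ K) :
    2 ^ m * ∫ T, (⨆ k, exp (c * ∑ i, (g k (T i).2 - g k (T i).1)))
      ∂(Measure.pi fun _ : Fin m => D.prod D) ≤ K := by
  set P : Measure (Fin m → Z) := Measure.pi fun _ : Fin m => D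
  set Q : Measure (Fin m → Z × Z) := Measure.pi fun _ : Fin m => D.prod D
  have hgi : ∀ k (i : Fin m), Measurable fun S : Fin m → Z => g k (S i) :=
    fun k i => (hg k).comp (measurable_pi_apply i)
  have hfst : MeasurePreserving (fun (T : Fin m → Z × Z) i => (T i).1) Q P :=
    measurePreserving_pi _ _ fun _ => measurePreserving_fst
  have hsnd : MeasurePreserving (fun (T : Fin m → Z × Z) i => (T i).2) Q P :=
    measurePreserving_pi _ _ fun _ => measurePreserving_snd
  have hIP : ∀ σ : Fin m → Bool,
      Integrable (fun S => ⨆ k, exp (2 * c * ∑ i, boolSign (σ i) * g k (S i))) P := fun σ =>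
    integrable_iSup_exp (fun k => measurable_signed_sum _ σ (hgi k))
      fun k S => abs_signed_sum_le _ σ _ fun i => hC k (S i)
  have hdiff : ∀ k (i : Fin m), Measurable fun T : Fin m → Z × Z => g k (T i).2 - g k (T i).1 :=
    fun k i => ((hg k).comp (measurable_snd.comp (measurable_pi_apply i))).sub
      ((hg k).comp (measurable_fst.comp (measurable_pi_apply i)))
  have hdb : ∀ k (T : Fin m → Z × Z) i, |g k (T i).2 - g k (T i).1| ≤ C + C := fun k T i =>
    (abs_sub _ _).trans (add_le_add (hC _ _) (hC _ _))
  have hIQ : ∀ σ : Fin m → Bool, Integrable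
      (fun T => ⨆ k, exp (c * ∑ i, boolSign (σ i) * (g k (T i).2 - g k (T i).1))) Q := fun σ =>
    integrable_iSup_exp (fun k => measurable_signed_sum _ σ (hdiff k))
      fun k T => abs_signed_sum_le _ σ _ (hdb k T)
  have hswap : ∀ σ : Fin m → Bool,
      ∫ T, (⨆ k, exp (c * ∑ i, (g k (T i).2 - g k (T i).1))) ∂Q
        = ∫ T, (⨆ k, exp (c * ∑ i, boolSign (σ i) * (g k (T i).2 - g k (T i).1))) ∂Q := by
    intro σ
    have hmp : MeasurePreserving
        (fun (T : Fin m → Z × Z) i => (if σ i then id else Prod.swap) (T i)) Q Q := by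
      refine measurePreserving_pi _ _ fun i => ?_
      cases σ i
      · simpa using Measure.measurePreserving_swap
      · simpa using MeasurePreserving.id _
    have hasm : AEStronglyMeasurable
        (fun T : Fin m → Z × Z => ⨆ k, exp (c * ∑ i, (g k (T i).2 - g k (T i).1)))
        (Measure.map (fun (T : Fin m → Z × Z) i => (if σ i then id else Prod.swap) (T i)) Q) := by
      refine (Measurable.iSup fun k => measurable_exp.comp ?_).aestronglyMeasurable
      exact (Finset.measurable_sum _ fun i _ => hdiff k i).const_mul _
    have := integral_map hmp.measurable.aemeasurable hasm
    rw [hmp.map_eq] at this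
    rw [this]
    refine integral_congr_ae (ae_of_all _ fun T => iSup_congr fun k => ?_)
    refine congrArg (fun x => exp (c * x)) (Finset.sum_congr rfl fun i _ => ?_)
    cases h : σ i <;> simp [h, boolSign]
  have hpt : ∀ (σ : Fin m → Bool) (T : Fin m → Z × Z),
      (⨆ k, exp (c * ∑ i, boolSign (σ i) * (g k (T i).2 - g k (T i).1)))
        ≤ (1 / 2) * (⨆ k, exp (2 * c * ∑ i, boolSign (σ i) * g k (T i).2))
          + (1 / 2) * ⨆ k, exp (2 * c * ∑ i, boolSign (!(σ i)) * g k (T i).1) := by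
    intro σ T
    refine ciSup_le fun k => ?_
    set a := 2 * c * ∑ i, boolSign (σ i) * g k (T i).2 with ha
    set b := 2 * c * ∑ i, boolSign (!(σ i)) * g k (T i).1 with hb
    have hab : c * ∑ i, boolSign (σ i) * (g k (T i).2 - g k (T i).1) = 1 / 2 * a + 1 / 2 * b := by
      simp only [ha, hb, boolSign_not, mul_sub, Finset.sum_sub_distrib, neg_mul,
        Finset.sum_neg_distrib]
      ring
    have h1 : exp (1 / 2 * a + 1 / 2 * b) ≤ 1 / 2 * exp a + 1 / 2 * exp b := by
      have h2 : (0 : ℝ) ≤ 1 / 2 := by norm_num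
      have := convexOn_exp.2 (Set.mem_univ a) (Set.mem_univ b) h2 h2 (by norm_num)
      simpa only [smul_eq_mul] using this
    rw [hab]
    refine h1.trans (add_le_add ?_ ?_)
    · exact mul_le_mul_of_nonneg_left (le_ciSup
        (f := fun k => exp (2 * c * ∑ i, boolSign (σ i) * g k (T i).2))
        (Set.finite_range _).bddAbove k) (by norm_num)
    · exact mul_le_mul_of_nonneg_left (le_ciSup
        (f := fun k => exp (2 * c * ∑ i, boolSign (!(σ i)) * g k (T i).1))
        (Set.finite_range _).bddAbove k) (by norm_num)
  set R : (Fin m → Bool) → ℝ := fun σ =>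
    ∫ S, (⨆ k, exp (2 * c * ∑ i, boolSign (σ i) * g k (S i))) ∂P with hR
  have hbound : ∀ σ : Fin m → Bool,
      ∫ T, (⨆ k, exp (c * ∑ i, (g k (T i).2 - g k (T i).1))) ∂Q
        ≤ 1 / 2 * R σ + 1 / 2 * R (fun i => !(σ i)) := by
    intro σ
    have e1 : Integrable (fun T : Fin m → Z × Z =>
        ⨆ k, exp (2 * c * ∑ i, boolSign (σ i) * g k (T i).2)) Q :=
      hsnd.integrable_comp_of_integrable (hIP σ)
    have e2 : Integrable (fun T : Fin m → Z × Z =>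
        ⨆ k, exp (2 * c * ∑ i, boolSign (!(σ i)) * g k (T i).1)) Q :=
      hfst.integrable_comp_of_integrable (hIP fun i => !(σ i))
    rw [hswap σ]
    refine (integral_mono (hIQ σ) ((e1.const_mul (1 / 2)).add (e2.const_mul (1 / 2)))
      (hpt σ)).trans (le_of_eq ?_)
    have i1 := integral_map hsnd.measurable.aemeasurable
      (f := fun S => ⨆ k, exp (2 * c * ∑ i, boolSign (σ i) * g k (S i)))
      (by rw [hsnd.map_eq]; exact (hIP σ).aestronglyMeasurable)
    have i2 := integral_map hfst.measurable.aemeasurable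
      (f := fun S => ⨆ k, exp (2 * c * ∑ i, boolSign (!(σ i)) * g k (S i)))
      (by rw [hfst.map_eq]; exact (hIP fun i => !(σ i)).aestronglyMeasurable)
    rw [hsnd.map_eq] at i1
    rw [hfst.map_eq] at i2
    simp only [hR]
    rw [i1, i2]
    rw [integral_add' (e1.const_mul (1 / 2)) (e2.const_mul (1 / 2)), integral_const_mul,
      integral_const_mul]
  calc 2 ^ m * ∫ T, (⨆ k, exp (c * ∑ i, (g k (T i).2 - g k (T i).1))) ∂Q
      = ∑ _σ : Fin m → Bool, ∫ T, (⨆ k, exp (c * ∑ i, (g k (T i).2 - g k (T i).1))) ∂Q := by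
        simp
    _ ≤ ∑ σ : Fin m → Bool, (1 / 2 * R σ + 1 / 2 * R (fun i => !(σ i))) :=
        Finset.sum_le_sum fun σ _ => hbound σ
    _ = ∑ σ : Fin m → Bool, R σ := by
        rw [Finset.sum_add_distrib, ← Finset.mul_sum, ← Finset.mul_sum, sum_not_eq R]
        ring
    _ = ∫ S, expRademacher (fun k i => g k (S i)) (2 * c) ∂P :=
        (integral_finsetSum _ fun σ _ => hIP σ).symm
    _ ≤ ∫ _S, K ∂P := integral_mono_ae (integrable_finsetSum _ fun σ _ => hIP σ)
        (integrable_const _) hK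
    _ = K := by simp

/-- Uniform one-sided deviation inequality from a bound on the exponential Rademacher supremum. -/
lemma measure_exists_deviation_le (hg : ∀ k, Measurable (g k)) {C : ℝ}
    (hC : ∀ k z, |g k z| ≤ C) {c : ℝ} (hc : 0 ≤ c) {K : ℝ}
    (hK : ∀ᵐ S ∂(Measure.pi fun _ : Fin m => D),
      expRademacher (fun k i => g k (S i)) (2 * c) ≤ 2 ^ m * K) (t : ℝ) :
    (Measure.pi fun _ : Fin m => D) {S | ∃ k, t < ∑ i, ((∫ z, g k z ∂D) - g k (S i))}
      ≤ ENNReal.ofReal (K * exp (-(c * t))) := by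
  set P : Measure (Fin m → Z) := Measure.pi fun _ : Fin m => D
  set F : (Fin m → Z) × (Fin m → Z) → ℝ := fun q =>
    ⨆ k, exp (c * ∑ i, (g k (q.2 i) - g k (q.1 i))) with hF
  have hmeasF : ∀ k, Measurable fun q : (Fin m → Z) × (Fin m → Z) =>
      c * ∑ i, (g k (q.2 i) - g k (q.1 i)) := fun k =>
    (Finset.measurable_sum _ fun i _ =>
      ((hg k).comp ((measurable_pi_apply i).comp measurable_snd)).sub
      ((hg k).comp ((measurable_pi_apply i).comp measurable_fst))).const_mul _
  have hboundF : ∀ k (q : (Fin m → Z) × (Fin m → Z)),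
      |c * ∑ i, (g k (q.2 i) - g k (q.1 i))| ≤ |c| * (m * (C + C)) := by
    intro k q
    have := abs_signed_sum_le c (fun _ : Fin m => true) (fun i => g k (q.2 i) - g k (q.1 i))
      (C := C + C) fun i => (abs_sub _ _).trans (add_le_add (hC _ _) (hC _ _))
    simpa [boolSign] using this
  have hFint : Integrable F (P.prod P) := integrable_iSup_exp hmeasF hboundF
  have hFle : ∫ q, F q ∂(P.prod P) ≤ K := by
    have hmp := measurePreserving_arrowProdEquivProdArrow Z Z (Fin m) (fun _ => D) (fun _ => D)
    have h1 := two_pow_mul_integral_iSup_exp_sub_le hg hC c hK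
    have h2 := hmp.integral_comp' (g := F)
    have h3 : ∫ q, F q ∂(P.prod P) = ∫ T, (⨆ k, exp (c * ∑ i, (g k (T i).2 - g k (T i).1)))
      ∂(Measure.pi fun _ : Fin m => D.prod D) := h2.symm
    rw [h3]
    exact le_of_mul_le_mul_left h1 (by positivity)
  set G : (Fin m → Z) → ℝ := fun S => ∫ S', F (S, S') ∂P with hG
  have hGint : Integrable G P := hFint.integral_prod_left
  have hFnn : ∀ q, 0 ≤ F q := fun q => Real.iSup_nonneg fun k => (exp_pos _).le
  have hGnn : ∀ S, 0 ≤ G S := fun S => integral_nonneg fun S' => hFnn _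
  have hGle : ∫ S, G S ∂P ≤ K := by
    rw [hG, ← integral_prod _ hFint]
    exact hFle
  have hsub : {S : Fin m → Z | ∃ k, t < ∑ i, ((∫ z, g k z ∂D) - g k (S i))}
      ⊆ {S | exp (c * t) ≤ G S} := by
    rintro S ⟨k, hk⟩
    have hgint : ∀ i : Fin m, Integrable (fun S' : Fin m → Z => g k (S' i)) P := fun i =>
      integrable_of_measurable_of_abs_le ((hg k).comp (measurable_pi_apply i)) fun S' => hC k _
    have h1 := iSup_exp_integral_le (ν := P) (f := fun k S' => c * ∑ i, (g k (S' i) - g k (S i)))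
      (fun k => (hmeasF k).comp (measurable_const.prodMk measurable_id))
      (fun k S' => hboundF k (S, S'))
    have h2 : ∫ S', c * ∑ i, (g k (S' i) - g k (S i)) ∂P
        = c * ∑ i, ((∫ z, g k z ∂D) - g k (S i)) := by
      rw [integral_const_mul, integral_finsetSum (f := fun i (S' : Fin m → Z) => g k (S' i) - g k (S i)) _
        fun i _ => (hgint i).sub (integrable_const _)]
      refine congrArg (fun x => c * x) (Finset.sum_congr rfl fun i _ => ?_)
      rw [integral_sub (hgint i) (integrable_const _)]
      have := (measurePreserving_eval (fun _ : Fin m => D) i)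
      have h4 := integral_map (μ := P) this.measurable.aemeasurable (f := g k)
        (hg k).aestronglyMeasurable
      rw [this.map_eq] at h4
      simp only [integral_const, probReal_univ, one_smul, h4]
    refine le_trans ?_ h1
    refine le_trans ?_ (le_ciSup (f := fun k => exp (∫ S', c * ∑ i, (g k (S' i) - g k (S i)) ∂P))
      (Set.finite_range _).bddAbove k)
    rw [h2]
    exact exp_le_exp.2 (mul_le_mul_of_nonneg_left hk.le hc)
  have hmk := mul_meas_ge_le_integral_of_nonneg (ae_of_all P hGnn) hGint (exp (c * t))
  refine (measure_mono hsub).trans ?_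
  rw [← ofReal_measureReal]
  refine ENNReal.ofReal_le_ofReal ?_
  rw [exp_neg, ← div_eq_mul_inv, le_div_iff₀ (exp_pos _), mul_comm]
  exact hmk.trans hGle

end Symmetrization

section ExponentialRace

instance : IsProbabilityMeasure (expMeasure 1) := isProbabilityMeasure_expMeasure one_pos

lemma expMeasure_one_Ioi {x : ℝ} (hx : 0 ≤ x) :
    expMeasure 1 (Set.Ioi x) = ENNReal.ofReal (exp (-x)) := by
  have h1 : (expMeasure 1).real (Set.Iic x) = 1 - exp (-x) := by
    rw [← cdf_eq_real, cdf_expMeasure_eq one_pos, if_pos hx, one_mul]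
  rw [← ofReal_measureReal, ← Set.compl_Iic, probReal_compl_eq_one_sub measurableSet_Iic, h1]
  congr 1
  ring

lemma lintegral_expMeasure_one_exp_neg_abs {a : ℝ} (ha : 0 ≤ a) :
    ∫⁻ t, ENNReal.ofReal (exp (-(|t| * a))) ∂(expMeasure 1) = ENNReal.ofReal (1 / (1 + a)) := by
  have ha' : 0 < 1 + a := by linarith
  have hdens : expMeasure 1 = volume.withDensity (exponentialPDF 1) := rfl
  have hm : ∀ r, Measurable (exponentialPDF r) := fun r =>
    (measurable_exponentialPDFReal r).ennreal_ofReal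
  rw [hdens, lintegral_withDensity_eq_lintegral_mul _ (hm 1) (by fun_prop)]
  have hpt : ∀ t, (exponentialPDF 1 * fun t => ENNReal.ofReal (exp (-(|t| * a)))) t
      = ENNReal.ofReal (1 / (1 + a)) * exponentialPDF (1 + a) t := by
    intro t
    simp only [Pi.mul_apply, exponentialPDF_eq]
    split_ifs with h
    · rw [← ENNReal.ofReal_mul (by positivity), ← ENNReal.ofReal_mul (by positivity),
        abs_of_nonneg h, one_mul, ← exp_add, ← mul_assoc, one_div_mul_cancel ha'.ne', one_mul]
      congr 2
      ring_nf
    · simp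
  simp_rw [hpt]
  rw [lintegral_const_mul _ (hm _), lintegral_exponentialPDF_eq_one ha', mul_one]

variable {Y : Type*}

/-- In the race between exponential clocks, `y₀` beats every other element of `A`: the clock of
`y₀` is `q.1`, the clock of `y` is `q.2 y`, slowed down by `exp (z y - z y₀)`. -/
def WinsRace (z : Y → ℝ) (A : Finset Y) (y₀ : Y) (q : ℝ × (Y → ℝ)) : Prop :=
  ∀ y ∈ A, y ≠ y₀ → |q.1| * exp (z y - z y₀) < q.2 y

/-- The law of the clocks in the exponential race. -/
noncomputable def raceMeasure (Y : Type*) [Fintype Y] : Measure (ℝ × (Y → ℝ)) :=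
  (expMeasure 1).prod (Measure.pi fun _ => expMeasure 1)

instance [Fintype Y] : IsProbabilityMeasure (raceMeasure Y) := by
  unfold raceMeasure
  infer_instance

lemma measurableSet_winsRace [Fintype Y] (z : Y → ℝ) (A : Finset Y) (y₀ : Y) :
    MeasurableSet {q | WinsRace z A y₀ q} := by
  have : {q : ℝ × (Y → ℝ) | WinsRace z A y₀ q}
      = ⋂ y ∈ A, ⋂ _ : y ≠ y₀, {q | |q.1| * exp (z y - z y₀) < q.2 y} := by
    ext q
    simp [WinsRace]
  rw [this]
  refine Finset.measurableSet_biInter _ fun y _ => MeasurableSet.iInter fun _ => ?_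
  exact measurableSet_lt (by fun_prop) (by fun_prop)

lemma raceMeasure_winsRace [Fintype Y] (z : Y → ℝ) (A : Finset Y) {y₀ : Y} (hy₀ : y₀ ∈ A) :
    (raceMeasure Y).real {q | WinsRace z A y₀ q} = 1 / ∑ y ∈ A, exp (z y - z y₀) := by
  classical
  set a := ∑ y ∈ A.erase y₀, exp (z y - z y₀) with ha
  have hsum : ∑ y ∈ A, exp (z y - z y₀) = 1 + a := by
    rw [← Finset.add_sum_erase _ _ hy₀, sub_self, exp_zero]
  have ha0 : 0 ≤ a := Finset.sum_nonneg fun _ _ => (exp_pos _).le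
  have hsec : ∀ t : ℝ, (Measure.pi fun _ : Y => expMeasure 1)
      (Prod.mk t ⁻¹' {q | WinsRace z A y₀ q}) = ENNReal.ofReal (exp (-(|t| * a))) := by
    intro t
    have hset : (Prod.mk t ⁻¹' {q | WinsRace z A y₀ q}) = Set.pi Set.univ fun y =>
        if y ∈ A.erase y₀ then Set.Ioi (|t| * exp (z y - z y₀)) else Set.univ := by
      ext e
      simp only [WinsRace, Set.mem_preimage, Set.mem_ofPred_eq, Set.mem_pi, Set.mem_univ,
        true_imp_iff]
      refine forall_congr' fun y => ?_
      by_cases h1 : y ∈ A <;> by_cases h2 : y = y₀ <;> simp [h1, h2]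
    rw [hset, Measure.pi_pi]
    have hf : ∀ y : Y, expMeasure 1 (if y ∈ A.erase y₀ then Set.Ioi (|t| * exp (z y - z y₀))
        else Set.univ) = if y ∈ A.erase y₀ then
          ENNReal.ofReal (exp (-(|t| * exp (z y - z y₀)))) else 1 := by
      intro y
      split_ifs
      · exact expMeasure_one_Ioi (by positivity)
      · exact measure_univ
    simp_rw [hf]
    rw [Finset.prod_ite_mem, Finset.univ_inter,
      ← ENNReal.ofReal_prod_of_nonneg fun _ _ => (exp_pos _).le, ← exp_sum, ha,
      Finset.mul_sum, Finset.sum_neg_distrib]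
  rw [Measure.real, raceMeasure, Measure.prod_apply (measurableSet_winsRace z A y₀)]
  simp_rw [hsec]
  rw [lintegral_expMeasure_one_exp_neg_abs ha0, ENNReal.toReal_ofReal (by positivity), hsum]

lemma softmaxProb_eq_one_div (s : Y → ℝ) (b : ℝ) (A : Finset Y) (y₀ : Y) :
    softmaxProb s b A y₀ = 1 / ∑ y ∈ A, exp (s y / b - s y₀ / b) := by
  simp_rw [softmaxProb, exp_sub, ← Finset.sum_div, one_div_div]

lemma softmaxProb_eq_raceMeasure [Fintype Y] (s : Y → ℝ) (b : ℝ) (A : Finset Y) {y₀ : Y}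
    (hy₀ : y₀ ∈ A) :
    softmaxProb s b A y₀ = (raceMeasure Y).real {q | WinsRace (fun y => s y / b) A y₀ q} := by
  rw [raceMeasure_winsRace _ _ hy₀, softmaxProb_eq_one_div]

end ExponentialRace

section PatternCount

lemma card_le_of_shatters_halfspaces {K : Type*} [DecidableEq K] {s : ℕ} (a : K → Fin s → ℝ)
    (f : K → ℝ → Prop) (hf : ∀ k, Antitone (f k)) (𝒜 : Finset (Finset K))
    (h𝒜 : ∀ P ∈ 𝒜, ∃ u : Fin s → ℝ, ∀ k, k ∈ P ↔ f k (∑ j, a k j * u j))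
    (T : Finset K) (hT : 𝒜.Shatters T) : #T ≤ s := by
  by_contra! hlt
  have hdep : ¬ LinearIndependent ℝ fun k : T => a k := by
    intro hli
    have := hli.fintype_card_le_finrank
    simp at this
    omega
  obtain ⟨c, hc0, k₀, hk₀⟩ := Fintype.not_linearIndependent_iff.1 hdep
  obtain ⟨P, hP, hPT⟩ := hT (T.filter_subset fun k => ∃ h : k ∈ T, 0 < c ⟨k, h⟩)
  obtain ⟨P', hP', hPT'⟩ := hT (T.filter_subset fun k => ∃ h : k ∈ T, c ⟨k, h⟩ < 0)
  obtain ⟨u, hu⟩ := h𝒜 P hP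
  obtain ⟨u', hu'⟩ := h𝒜 P' hP'
  have hmem : ∀ k : T, f k (∑ j, a k j * u j) ↔ 0 < c k := by
    intro k
    rw [← hu]
    have := Finset.ext_iff.1 hPT k
    simpa [k.2] using this
  have hmem' : ∀ k : T, f k (∑ j, a k j * u' j) ↔ c k < 0 := by
    intro k
    rw [← hu']
    have := Finset.ext_iff.1 hPT' k
    simpa [k.2] using this
  have hterm : ∀ k : T, c k ≠ 0 → c k * ((∑ j, a k j * u j) - ∑ j, a k j * u' j) < 0 := by
    intro k hk
    rcases lt_or_gt_of_ne hk with hneg | hpos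
    · refine mul_neg_of_neg_of_pos hneg (sub_pos.2 ?_)
      by_contra! hle
      exact absurd ((hmem k).1 (hf k hle ((hmem' k).2 hneg))) hneg.not_gt
    · refine mul_neg_of_pos_of_neg hpos (sub_neg.2 ?_)
      by_contra! hle
      exact absurd ((hmem' k).1 (hf k hle ((hmem k).2 hpos))) hpos.not_gt
  have hneg : ∑ k : T, c k * ((∑ j, a k j * u j) - ∑ j, a k j * u' j) < 0 := by
    refine Finset.sum_neg' (fun k _ => ?_) ⟨k₀, Finset.mem_univ _, hterm k₀ hk₀⟩
    by_cases hk : c k = 0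
    · simp [hk]
    · exact (hterm k hk).le
  have hzero : ∑ k : T, c k * ((∑ j, a k j * u j) - ∑ j, a k j * u' j) = 0 := by
    have h1 : ∀ k : T, c k * ((∑ j, a k j * u j) - ∑ j, a k j * u' j)
        = ∑ j, (c k * a k j) * (u j - u' j) := by
      intro k
      rw [← Finset.sum_sub_distrib, Finset.mul_sum]
      exact Finset.sum_congr rfl fun j _ => by ring
    simp_rw [h1]
    rw [Finset.sum_comm]
    refine Finset.sum_eq_zero fun j _ => ?_
    rw [← Finset.sum_mul]
    have := congrFun hc0 j
    simp only [Finset.sum_apply, Pi.smul_apply, smul_eq_mul, Pi.zero_apply] at this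
    rw [this, zero_mul]
  exact hneg.ne hzero

lemma sum_choose_le_succ_pow (n s : ℕ) : ∑ k ∈ Finset.Iic s, n.choose k ≤ (n + 1) ^ s := by
  rw [add_pow, Nat.range_succ_eq_Iic]
  refine Finset.sum_le_sum fun k hk => ?_
  rw [one_pow, mul_one]
  exact (Nat.choose_le_pow n k).trans (Nat.le_mul_of_pos_right _
    (Nat.choose_pos (Finset.mem_Iic.1 hk)))

lemma card_halfspace_patterns_le {K : Type*} [Fintype K] [DecidableEq K] {s : ℕ}
    (a : K → Fin s → ℝ) (f : K → ℝ → Prop) (hf : ∀ k, Antitone (f k)) (𝒜 : Finset (Finset K))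
    (h𝒜 : ∀ P ∈ 𝒜, ∃ u : Fin s → ℝ, ∀ k, k ∈ P ↔ f k (∑ j, a k j * u j)) :
    #𝒜 ≤ (Fintype.card K + 1) ^ s := by
  have hvc : 𝒜.vcDim ≤ s := Finset.sup_le fun T hT =>
    card_le_of_shatters_halfspaces a f hf 𝒜 h𝒜 T (Finset.mem_shatterer.1 hT)
  calc #𝒜 ≤ #𝒜.shatterer := Finset.card_le_card_shatterer 𝒜
    _ ≤ ∑ k ∈ Finset.Iic 𝒜.vcDim, (Fintype.card K).choose k := Finset.card_shatterer_le_sum_vcDim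
    _ ≤ ∑ k ∈ Finset.Iic s, (Fintype.card K).choose k :=
        Finset.sum_le_sum_of_subset (Finset.Iic_subset_Iic.2 hvc)
    _ ≤ _ := sum_choose_le_succ_pow _ _

lemma exists_sum_mul_eq_of_sparse {d s : ℕ} (hd : 0 < d) (v : Fin d → ℝ)
    (hv : #{j | v j ≠ 0} ≤ s) : ∃ (g : Fin s → Fin d) (u : Fin s → ℝ),
      ∀ x : Fin d → ℝ, ∑ j, x j * v j = ∑ j, x (g j) * u j := by
  classical
  have hcard : Fintype.card {j // v j ≠ 0} ≤ Fintype.card (Fin s) := by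
    rw [Fintype.card_subtype, Fintype.card_fin]
    exact hv
  obtain ⟨e⟩ := Function.Embedding.nonempty_of_card_le hcard
  refine ⟨Function.extend e Subtype.val fun _ => ⟨0, hd⟩,
    Function.extend e (fun j => v j) 0, fun x => ?_⟩
  have h1 := Fintype.sum_of_injective (Subtype.val : {j // v j ≠ 0} → Fin d)
    Subtype.val_injective (fun j => x j * v j) (fun j => x j * v j)
    (fun j hj => by
      have : v j = 0 := by
        by_contra h
        exact hj ⟨⟨j, h⟩, rfl⟩
      simp [this]) fun _ => rfl
  rw [← h1]
  refine Fintype.sum_of_injective e e.injective _ _ (fun j hj => ?_) fun j => ?_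
  · rw [Function.extend_apply' _ _ _ (by simpa using hj),
      Function.extend_apply' _ _ _ (by simpa using hj), Pi.zero_apply, mul_zero]
  · rw [e.injective.extend_apply, e.injective.extend_apply]

open Classical in
/-- The win/loss patterns, centred to take the values `±1/2`, produced by sparse weights on a fixed
sample with fixed clocks. -/
lemma exists_finset_race_patterns {Y : Type*} {m d s r : ℕ} (hm : 0 < m) (hd : 0 < d) (hr : 0 < r)
    (A : Fin m → Finset Y) (hA : ∀ i, #(A i) ≤ r) (y₀ : Fin m → Y) (hy₀ : ∀ i, y₀ i ∈ A i)
    (ψ : Fin m → Y → Fin d → ℝ) (q : ℝ × (Y → ℝ)) :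
    ∃ B : Finset (Fin m → ℝ), #B ≤ (d * (m * r)) ^ s ∧ (∀ b ∈ B, ∀ i, |b i| ≤ 1 / 2) ∧
      ∀ v : Fin d → ℝ, #{j | v j ≠ 0} ≤ s →
        (fun i => 1 / 2 - if WinsRace (linScore (ψ i) v) (A i) (y₀ i) q then (1 : ℝ) else 0) ∈ B := by
  let K := Σ i : Fin m, {y // y ∈ (A i).erase (y₀ i)}
  let f : K → ℝ → Prop := fun p x => |q.1| * exp x < q.2 p.2
  have hf : ∀ p, Antitone (f p) := fun p x x' hxx' h =>
    (mul_le_mul_of_nonneg_left (exp_le_exp.2 hxx') (abs_nonneg _)).trans_lt h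
  let a : (Fin s → Fin d) → K → Fin s → ℝ := fun g p j => ψ p.1 p.2 (g j) - ψ p.1 (y₀ p.1) (g j)
  let 𝒜 : (Fin s → Fin d) → Finset (Finset K) := fun g =>
    {P | ∃ u : Fin s → ℝ, ∀ p, p ∈ P ↔ f p (∑ j, a g p j * u j)}
  let Φ : Finset K → Fin m → ℝ := fun P i => 1 / 2 - if ∀ p : K, p.1 = i → p ∈ P then (1 : ℝ) else 0
  have hK : Fintype.card K + 1 ≤ m * r := by
    have h1 : Fintype.card K ≤ m * (r - 1) := by
      rw [Fintype.card_sigma]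
      calc ∑ i, Fintype.card {y // y ∈ (A i).erase (y₀ i)} ≤ ∑ _i : Fin m, (r - 1) := by
            refine Finset.sum_le_sum fun i _ => ?_
            rw [Fintype.card_coe, Finset.card_erase_of_mem (hy₀ i)]
            exact Nat.sub_le_sub_right (hA i) 1
        _ = m * (r - 1) := by simp
    obtain ⟨r, rfl⟩ : ∃ r', r = r' + 1 := ⟨r - 1, by omega⟩
    simp only [Nat.add_sub_cancel] at h1
    rw [mul_add, mul_one]
    omega
  refine ⟨Finset.univ.biUnion fun g => (𝒜 g).image Φ, ?_, ?_, ?_⟩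
  · calc #(Finset.univ.biUnion fun g => (𝒜 g).image Φ)
        ≤ ∑ g, #((𝒜 g).image Φ) := Finset.card_biUnion_le
      _ ≤ ∑ _g : Fin s → Fin d, (m * r) ^ s := by
          refine Finset.sum_le_sum fun g _ => Finset.card_image_le.trans ?_
          refine (card_halfspace_patterns_le (a g) f hf (𝒜 g) fun P hP => ?_).trans
            (Nat.pow_le_pow_left hK s)
          exact (Finset.mem_filter.1 hP).2
      _ = (d * (m * r)) ^ s := by simp [mul_pow]
  · intro b hb i
    obtain ⟨g, -, hb⟩ := Finset.mem_biUnion.1 hb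
    obtain ⟨P, -, rfl⟩ := Finset.mem_image.1 hb
    simp only [Φ]
    split_ifs <;> norm_num [abs_le]
  · intro v hv
    obtain ⟨g, u, hgu⟩ := exists_sum_mul_eq_of_sparse hd v hv
    refine Finset.mem_biUnion.2 ⟨g, Finset.mem_univ _, Finset.mem_image.2
      ⟨Finset.univ.filter fun p => f p (∑ j, a g p j * u j), ?_, ?_⟩⟩
    · simp only [𝒜, Finset.mem_filter_univ]
      exact ⟨u, fun p => by simp⟩
    · funext i
      simp only [Φ]
      congr 1
      refine if_congr ?_ rfl rfl
      have hlin : ∀ p : K, ∑ j, a g p j * u j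
          = linScore (ψ p.1) v p.2 - linScore (ψ p.1) v (y₀ p.1) := by
        intro p
        rw [← hgu fun j => ψ p.1 p.2 j - ψ p.1 (y₀ p.1) j]
        simp only [linScore, sub_mul, Finset.sum_sub_distrib]
      simp only [Finset.mem_filter_univ, hlin, f]
      constructor
      · intro h y hy hne
        exact h ⟨i, y, Finset.mem_erase.2 ⟨hne, hy⟩⟩ rfl
      · rintro h ⟨i', y, hy⟩ rfl
        exact h y (Finset.mem_of_mem_erase hy) (Finset.ne_of_mem_erase hy)

end PatternCount

section SoftmaxClass

lemma linScore_div {Y : Type*} {d : ℕ} (φ : Y → Fin d → ℝ) (w : Fin d → ℝ) (b : ℝ) (y : Y) :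
    linScore φ w y / b = linScore φ (b⁻¹ • w) y := by
  simp only [linScore, Finset.sum_div, Pi.smul_apply, smul_eq_mul]
  exact Finset.sum_congr rfl fun j _ => by ring

lemma softmaxProb_linScore_smul {Y : Type*} {d : ℕ} (φ : Y → Fin d → ℝ) (w : Fin d → ℝ) (b : ℝ)
    (A : Finset Y) (y : Y) :
    softmaxProb (linScore φ w) b A y = softmaxProb (linScore φ (b⁻¹ • w)) 1 A y := by
  simp only [softmaxProb, linScore_div, inv_one, one_smul]

lemma softmaxProb_nonneg {Y : Type*} (s : Y → ℝ) (b : ℝ) (A : Finset Y) (y : Y) :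
    0 ≤ softmaxProb s b A y :=
  div_nonneg (exp_pos _).le (Finset.sum_nonneg fun _ _ => (exp_pos _).le)

lemma softmaxProb_le_one {Y : Type*} (s : Y → ℝ) (b : ℝ) (A : Finset Y) {y : Y} (hy : y ∈ A) :
    softmaxProb s b A y ≤ 1 :=
  div_le_one_of_le₀ (Finset.single_le_sum (f := fun y => exp (s y / b))
    (fun _ _ => (exp_pos _).le) hy) (Finset.sum_nonneg fun _ _ => (exp_pos _).le)

lemma continuous_softmaxProb_linScore {Y : Type*} {d : ℕ} (φ : Y → Fin d → ℝ) (b : ℝ)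
    {A : Finset Y} (hA : A.Nonempty) (y : Y) :
    Continuous fun v : Fin d → ℝ => softmaxProb (linScore φ v) b A y := by
  unfold softmaxProb linScore
  refine Continuous.div (by fun_prop) (by fun_prop) fun v => ?_
  exact (Finset.sum_pos (fun _ _ => exp_pos _) hA).ne'

lemma expRademacher_softmaxProb_le {Y : Type*} [Fintype Y] {m d s r : ℕ} (hm : 0 < m) (hd : 0 < d)
    (hr : 0 < r) (A : Fin m → Finset Y) (hA : ∀ i, #(A i) ≤ r) (y₀ : Fin m → Y)
    (hy₀ : ∀ i, y₀ i ∈ A i) (ψ : Fin m → Y → Fin d → ℝ) {ι : Type*} [Finite ι] [Nonempty ι]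
    (w : ι → Fin d → ℝ) (hw : ∀ k, #{j | w k j ≠ 0} ≤ s) (b : ι → ℝ) (c : ℝ) :
    expRademacher (fun k i => 1 / 2 - softmaxProb (linScore (ψ i) (w k)) (b k) (A i) (y₀ i)) c
      ≤ 2 ^ m * ((d * (m * r) : ℝ) ^ s * exp (c ^ 2 * m / 8)) := by
  classical
  let v : ι → Fin d → ℝ := fun k => (b k)⁻¹ • w k
  have hv : ∀ k, #{j | v k j ≠ 0} ≤ s := fun k =>
    (Finset.card_le_card fun j hj => by
      simp only [Finset.mem_filter_univ] at hj ⊢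
      exact fun h => hj (by simp [v, h])).trans (hw k)
  let H : ℝ × (Y → ℝ) → ι → Fin m → ℝ := fun q k i =>
    1 / 2 - if WinsRace (linScore (ψ i) (v k)) (A i) (y₀ i) q then (1 : ℝ) else 0
  have hmeasI : ∀ k i, Measurable fun q : ℝ × (Y → ℝ) =>
      if WinsRace (linScore (ψ i) (v k)) (A i) (y₀ i) q then (1 : ℝ) else 0 := fun k i =>
    Measurable.ite (measurableSet_winsRace _ _ _) measurable_const measurable_const
  have hH : ∀ k i, Measurable fun q => H q k i := fun k i => measurable_const.sub (hmeasI k i)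
  have hHb : ∀ q k i, |H q k i| ≤ 1 / 2 := by
    intro q k i
    simp only [H]
    split_ifs <;> norm_num [abs_le]
  have hint : ∀ k i, 1 / 2 - softmaxProb (linScore (ψ i) (w k)) (b k) (A i) (y₀ i)
      = ∫ q, H q k i ∂(raceMeasure Y) := by
    intro k i
    have h1 : Integrable (fun q : ℝ × (Y → ℝ) =>
        if WinsRace (linScore (ψ i) (v k)) (A i) (y₀ i) q then (1 : ℝ) else 0) (raceMeasure Y) :=
      integrable_of_measurable_of_abs_le (hmeasI k i) (C := 1) fun q => by split_ifs <;> simp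
    have h2 : ∫ q, (if WinsRace (linScore (ψ i) (v k)) (A i) (y₀ i) q then (1 : ℝ) else 0)
        ∂(raceMeasure Y) = (raceMeasure Y).real
          {q | WinsRace (linScore (ψ i) (v k)) (A i) (y₀ i) q} := by
      rw [← integral_indicator_one (measurableSet_winsRace _ _ _)]
      rfl
    rw [softmaxProb_eq_raceMeasure _ _ _ (hy₀ i)]
    simp only [H]
    rw [integral_sub (integrable_const _) h1, h2]
    simp [linScore_div, v]
  simp_rw [hint]
  refine expRademacher_integral_le hH hHb fun q => ?_
  obtain ⟨B, hBcard, hBb, hBmem⟩ := exists_finset_race_patterns (s := s) hm hd hr A hA y₀ hy₀ ψ q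
  refine (expRademacher_le_of_finite_range (H q) c B (fun k => hBmem (v k) (hv k)) hBb).trans ?_
  have hcast : (#B : ℝ) ≤ (d * (m * r) : ℝ) ^ s := by exact_mod_cast hBcard
  calc (#B : ℝ) * (2 ^ m * exp (c ^ 2 * m / 8))
      ≤ (d * (m * r) : ℝ) ^ s * (2 ^ m * exp (c ^ 2 * m / 8)) := by gcongr
    _ = _ := by ring

lemma pow_mul_exp_neg_le {m d s r : ℕ} (hm : 0 < m) (hd : 0 < d) (hr : 0 < r) {δ : ℝ}
    (hδ0 : 0 < δ) (hδ1 : δ < 1) {ε : ℝ}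
    (hε : ε = 2 * √((s : ℝ) * (log d + 2 * log (m * r)) / m) + 3 * √(log (2 / δ) / (2 * m))) :
    (d * (m * r) : ℝ) ^ s * exp (-(m * ε ^ 2 / 2)) ≤ δ := by
  have hm' : (1 : ℝ) ≤ m := by exact_mod_cast hm
  have hd' : (1 : ℝ) ≤ d := by exact_mod_cast hd
  have hr' : (1 : ℝ) ≤ r := by exact_mod_cast hr
  have hm0 : (0 : ℝ) < m := by linarith
  have hmr : (1 : ℝ) ≤ m * r := one_le_mul_of_one_le_of_one_le hm' hr'
  have hmr0 : (0 : ℝ) < m * r := by linarith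
  have hlogmr : 0 ≤ log (m * r) := log_nonneg hmr
  have hlogd : 0 ≤ log d := log_nonneg hd'
  have hl : 0 ≤ log (2 / δ) := log_nonneg (by rw [le_div_iff₀ hδ0]; linarith)
  set L := log d + 2 * log (m * r) with hL
  have hsL : 0 ≤ (s : ℝ) * L := by positivity
  have h1 := Real.sq_sqrt (show 0 ≤ (s : ℝ) * L / m by positivity)
  have h2 := Real.sq_sqrt (show 0 ≤ log (2 / δ) / (2 * m) by positivity)
  have hε2 : 4 * (s * L / m) + 9 * (log (2 / δ) / (2 * m)) ≤ ε ^ 2 := by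
    rw [hε]
    nlinarith [mul_nonneg (Real.sqrt_nonneg ((s : ℝ) * L / m))
      (Real.sqrt_nonneg (log (2 / δ) / (2 * m)))]
  have hexp : 2 * (s * L) + 9 / 4 * log (2 / δ) ≤ m * ε ^ 2 / 2 := by
    have h3 := mul_le_mul_of_nonneg_left hε2 hm0.le
    have h4 : m * (4 * (s * L / m) + 9 * (log (2 / δ) / (2 * m)))
        = 4 * (s * L) + 9 / 2 * log (2 / δ) := by
      field_simp
    linarith
  have hN : (d * (m * r) : ℝ) ^ s = exp (s * (log d + log (m * r))) := by
    rw [exp_nat_mul, exp_add, exp_log (by linarith), exp_log hmr0]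
  have hNL : s * (log d + log (m * r)) ≤ s * L :=
    mul_le_mul_of_nonneg_left (by rw [hL]; linarith) (Nat.cast_nonneg s)
  rw [hN, ← exp_add]
  calc exp (s * (log d + log (m * r)) + -(m * ε ^ 2 / 2)) ≤ exp (-log (2 / δ)) :=
        exp_le_exp.2 (by linarith)
    _ = δ / 2 := by rw [exp_neg, exp_log (by positivity), inv_div]
    _ ≤ δ := by linarith

lemma ae_of_forall_mem_of_measure_eq_one {T : Type*} [MeasurableSpace T] {μ : Measure T}
    [IsProbabilityMeasure μ] {A : Set T} (hA : μ A = 1) {p : T → Prop}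
    (hp : MeasurableSet {t | p t}) (h : ∀ t ∈ A, p t) : ∀ᵐ t ∂μ, p t := by
  have h1 : μ {t | p t} = 1 := le_antisymm prob_le_one (hA ▸ measure_mono h)
  exact (prob_compl_eq_zero_iff hp).2 h1

end SoftmaxClass

/-- **Theorem 1: Rademacher-based generalization bound for the CRF loss.**
With probability at least `1 − δ` over an i.i.d. sample `S ∼ D^m`,
simultaneously for all `s`-sparse weight vectors `w`,
`L(w,D) ≤ L(w,S) + 2√(s(ln d + 2 ln(mr))/m) + 3√(ln(2/δ)/(2m))`. -/
theorem crf_generalization_bound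
    {X : Type*} [MeasurableSpace X]
    {𝒴 : Type*} [Fintype 𝒴] [MeasurableSpace 𝒴]
    (m d s r : ℕ) (hm : 0 < m) (hd : 0 < d) (hr : 0 < r)
    (Ysets : X → Finset 𝒴) (hYne : ∀ x, (Ysets x).Nonempty)
    (hYcard : ∀ x, (Ysets x).card ≤ r)
    (φ : X → 𝒴 → Fin d → ℝ)
    (β : ℕ → (Fin d → ℝ) → ℝ) (hβ : ∀ k w, 0 < β k w)
    (D : Measure (X × 𝒴)) [IsProbabilityMeasure D]
    (hsupp : D {p : X × 𝒴 | p.2 ∈ Ysets p.1} = 1)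
    (hmeas : ∀ w : Fin d → ℝ, Measurable fun p : X × 𝒴 =>
      softmaxProb (linScore (φ p.1) w) (β m w) (Ysets p.1) p.2)
    (δ : ℝ) (hδ0 : 0 < δ) (hδ1 : δ < 1) :
    (Measure.pi fun _ : Fin m => D)
      {S : Fin m → X × 𝒴 | ∀ w : Fin d → ℝ,
        (Finset.univ.filter fun j => w j ≠ 0).card ≤ s →
        (∫ p, (1 - softmaxProb (linScore (φ p.1) w) (β m w) (Ysets p.1) p.2) ∂D)
          ≤ (1 / (m : ℝ)) * (∑ i, (1 -
              softmaxProb (linScore (φ (S i).1) w) (β m w) (Ysets (S i).1) (S i).2))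
            + 2 * Real.sqrt ((s : ℝ) * (Real.log d + 2 * Real.log (m * r)) / m)
            + 3 * Real.sqrt (Real.log (2 / δ) / (2 * m))}
      ≥ ENNReal.ofReal (1 - δ) := by
  classical
  set ε : ℝ := 2 * √((s : ℝ) * (log d + 2 * log (m * r)) / m) + 3 * √(log (2 / δ) / (2 * m))
    with hε
  set P : Measure (Fin m → X × 𝒴) := Measure.pi fun _ : Fin m => D with hP
  set q : (Fin d → ℝ) → X × 𝒴 → ℝ := fun w p =>
    softmaxProb (linScore (φ p.1) w) (β m w) (Ysets p.1) p.2 with hq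
  have hm0 : (0 : ℝ) < m := by exact_mod_cast hm
  have hε0 : 0 ≤ ε := by positivity
  have hq0 : ∀ w p, 0 ≤ q w p := fun w p => softmaxProb_nonneg _ _ _ _
  have hq1 : ∀ w, ∀ᵐ p ∂D, q w p ≤ 1 := fun w =>
    ae_of_forall_mem_of_measure_eq_one hsupp (measurableSet_le (hmeas w) measurable_const)
      fun p hp => softmaxProb_le_one _ _ _ hp
  let g : (Fin d → ℝ) → X × 𝒴 → ℝ := fun w p => 1 / 2 - min (q w p) 1
  have hg : ∀ w, Measurable (g w) := fun w =>
    measurable_const.sub ((hmeas w).min measurable_const)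
  have hgb : ∀ w p, |g w p| ≤ 1 / 2 := by
    intro w p
    have h1 : 0 ≤ min (q w p) 1 := le_min (hq0 w p) zero_le_one
    have h2 : min (q w p) 1 ≤ 1 := min_le_right _ _
    rw [abs_le]
    constructor <;> simp only [g] <;> linarith
  let Bad : (Fin d → ℝ) → Set (Fin m → X × 𝒴) := fun w =>
    {S | m * ε < ∑ i, ((∫ p, g w p ∂D) - g w (S i))}
  have hfin : ∀ (n : ℕ) (w : Fin (n + 1) → Fin d → ℝ), (∀ k, #{j | w k j ≠ 0} ≤ s) →
      P {S | ∃ k, S ∈ Bad (w k)} ≤ ENNReal.ofReal δ := by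
    intro n w hw
    have hpi : P (Set.univ.pi fun _ : Fin m => {p : X × 𝒴 | p.2 ∈ Ysets p.1}) = 1 := by
      rw [hP, Measure.pi_pi]
      simp [hsupp]
    have hK : ∀ᵐ S ∂P, expRademacher (fun k i => g (w k) (S i)) (2 * ε)
        ≤ 2 ^ m * ((d * (m * r) : ℝ) ^ s * exp ((2 * ε) ^ 2 * m / 8)) := by
      refine ae_of_forall_mem_of_measure_eq_one hpi (measurableSet_le ?_ measurable_const)
        fun S hS => ?_
      · exact Finset.measurable_sum _ fun σ _ => Measurable.iSup fun k => measurable_exp.comp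
          (measurable_signed_sum _ σ fun i => (hg (w k)).comp (measurable_pi_apply i))
      · have hS' : ∀ i, (S i).2 ∈ Ysets (S i).1 := fun i => hS i (Set.mem_univ i)
        have h1 : (fun k i => g (w k) (S i)) = fun k i => 1 / 2 - softmaxProb
            (linScore (φ (S i).1) (w k)) (β m (w k)) (Ysets (S i).1) (S i).2 := by
          funext k i
          simp only [g, q]
          rw [min_eq_left (softmaxProb_le_one _ _ _ (hS' i))]
        rw [h1]
        exact expRademacher_softmaxProb_le hm hd hr (fun i => Ysets (S i).1)
          (fun i => hYcard _) (fun i => (S i).2) hS' (fun i => φ (S i).1) w hw _ _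
    refine (measure_exists_deviation_le (fun k => hg (w k)) (fun k => hgb (w k)) hε0 hK
      (m * ε)).trans (ENNReal.ofReal_le_ofReal ?_)
    rw [mul_assoc, ← exp_add]
    refine le_trans (le_of_eq ?_) (pow_mul_exp_neg_le (s := s) hm hd hr hδ0 hδ1 hε)
    congr 2
    ring
  let W := {w : Fin d → ℝ // #{j | w j ≠ 0} ≤ s}
  have : Nonempty W := ⟨⟨0, by simp⟩⟩
  let θ : W → Fin d → ℝ := fun w => (β m w.1)⁻¹ • w.1
  let Q : (Fin d → ℝ) → X × 𝒴 → ℝ := fun v p =>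
    softmaxProb (linScore (φ p.1) v) 1 (Ysets p.1) p.2
  have hqQ : ∀ (w : W) p, q w p = Q (θ w) p := fun w p => softmaxProb_linScore_smul _ _ _ _ _
  have hQc : ∀ p, Continuous fun v => Q v p := fun p =>
    continuous_softmaxProb_linScore _ _ (hYne p.1) _
  choose w hw using fun n => (TopologicalSpace.denseSeq (Set.range θ) n).2
  have hdense : ∀ w₀ : W, ∃ n : ℕ → ℕ,
      Filter.Tendsto (fun k => θ (w (n k))) Filter.atTop (nhds (θ w₀)) := by
    intro w₀
    have h1 := TopologicalSpace.denseRange_denseSeq (Set.range θ) ⟨θ w₀, w₀, rfl⟩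
    obtain ⟨x, hx, hlim⟩ := mem_closure_iff_seq_limit.1 h1
    choose n hn using hx
    refine ⟨n, ?_⟩
    have h2 := (continuous_subtype_val.tendsto _).comp hlim
    refine h2.congr fun k => ?_
    rw [hw, hn]
    rfl
  have hunion : P (⋃ n, Bad (w n)) ≤ ENNReal.ofReal δ := by
    have hmono : Monotone fun n : ℕ => {S | ∃ k : Fin (n + 1), S ∈ Bad (w k)} := by
      rintro a b hab S ⟨k, hk⟩
      exact ⟨⟨k, by omega⟩, hk⟩
    have hsub : ⋃ n, Bad (w n) ⊆ ⋃ n : ℕ, {S | ∃ k : Fin (n + 1), S ∈ Bad (w k)} :=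
      Set.iUnion_mono fun n S hS => ⟨Fin.last n, hS⟩
    refine (measure_mono hsub).trans ?_
    rw [hmono.measure_iUnion]
    exact iSup_le fun n => hfin n (fun k => w k) fun k => (w k).2
  have hae : ∀ᵐ S ∂P, ∀ n i, q (w n) (S i) ≤ 1 := by
    rw [ae_all_iff]
    intro n
    rw [ae_all_iff]
    exact fun i => (measurePreserving_eval (fun _ : Fin m => D) i).quasiMeasurePreserving.ae
      (hq1 (w n))
  set G : Set (Fin m → X × 𝒴) := {S | ∀ w : Fin d → ℝ, #{j | w j ≠ 0} ≤ s →
    (∫ p, (1 - q w p) ∂D) ≤ (1 / (m : ℝ)) * (∑ i, (1 - q w (S i))) +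
      2 * √((s : ℝ) * (log d + 2 * log (m * r)) / m) + 3 * √(log (2 / δ) / (2 * m))} with hG
  have hgood : ∀ S, S ∉ ⋃ n, Bad (w n) → (∀ n i, q (w n) (S i) ≤ 1) → S ∈ G := by
    intro S hS hS1
    have hseq : ∀ n, (∫ p, (1 - q (w n) p) ∂D)
        ≤ (1 / (m : ℝ)) * (∑ i, (1 - q (w n) (S i))) + ε := by
      intro n
      have h1 : ∑ i, ((∫ p, g (w n) p ∂D) - g (w n) (S i)) ≤ m * ε :=
        not_lt.1 fun h => hS (Set.mem_iUnion.2 ⟨n, h⟩)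
      have h2 : ∫ p, (1 - q (w n) p) ∂D = (∫ p, g (w n) p ∂D) + 1 / 2 := by
        have h3 : ∫ p, (1 - q (w n) p) ∂D = ∫ p, (g (w n) p + 1 / 2) ∂D := by
          refine integral_congr_ae ?_
          filter_upwards [hq1 (w n)] with p hp
          simp only [g]
          rw [min_eq_left hp]
          ring
        rw [h3, integral_add (integrable_of_measurable_of_abs_le (hg _) (hgb _))
          (integrable_const _)]
        simp
      have h4 : ∀ i, g (w n) (S i) = (1 - q (w n) (S i)) - 1 / 2 := by
        intro i
        simp only [g]
        rw [min_eq_left (hS1 n i)]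
        ring
      simp_rw [h4, show ∀ a b : ℝ, a - (b - 1 / 2) = (a + 1 / 2) - b by intros; ring, ← h2] at h1
      rw [Finset.sum_sub_distrib, Finset.sum_const, Finset.card_univ, Fintype.card_fin,
        nsmul_eq_mul] at h1
      rw [← sub_le_iff_le_add', one_div, inv_mul_eq_div, sub_le_iff_le_add,
        ← sub_le_iff_le_add', le_div_iff₀ hm0]
      linarith
    intro w₀ hw₀
    obtain ⟨n, hn⟩ := hdense ⟨w₀, hw₀⟩
    have hpt : ∀ p, Filter.Tendsto (fun k => 1 - q (w (n k)) p) Filter.atTop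
        (nhds (1 - q w₀ p)) := by
      intro p
      rw [show q w₀ p = Q (θ ⟨w₀, hw₀⟩) p from hqQ ⟨w₀, hw₀⟩ p]
      simp_rw [hqQ]
      exact (((hQc p).tendsto _).comp hn).const_sub 1
    have hlimI : Filter.Tendsto (fun k => ∫ p, (1 - q (w (n k)) p) ∂D) Filter.atTop
        (nhds (∫ p, (1 - q w₀ p) ∂D)) := by
      refine tendsto_integral_of_dominated_convergence (fun _ => 1)
        (fun k => (measurable_const.sub (hmeas _)).aestronglyMeasurable) (integrable_const _)
        (fun k => ?_) (ae_of_all _ hpt)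
      filter_upwards [hq1 (w (n k))] with p hp
      rw [Real.norm_eq_abs, abs_le]
      constructor <;> linarith [hq0 (w (n k)) p]
    have hlimS : Filter.Tendsto
        (fun k => (1 / (m : ℝ)) * (∑ i, (1 - q (w (n k)) (S i))) + ε) Filter.atTop
        (nhds ((1 / (m : ℝ)) * (∑ i, (1 - q w₀ (S i))) + ε)) :=
      ((tendsto_finsetSum _ fun i _ => hpt (S i)).const_mul _).add_const _
    rw [add_assoc]
    exact le_of_tendsto_of_tendsto' hlimI hlimS fun k => hseq (n k)
  have hcover : (1 : ENNReal) ≤ P G + ENNReal.ofReal δ := by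
    have hGae : (Set.univ : Set (Fin m → X × 𝒴)) ≤ᵐ[P] (G ∪ ⋃ n, Bad (w n) : Set _) := by
      filter_upwards [hae] with S hS _
      by_cases hB : S ∈ ⋃ n, Bad (w n)
      · exact Or.inr hB
      · exact Or.inl (hgood S hB hS)
    calc (1 : ENNReal) = P Set.univ := measure_univ.symm
      _ ≤ P (G ∪ ⋃ n, Bad (w n)) := measure_mono_ae hGae
      _ ≤ P G + P (⋃ n, Bad (w n)) := measure_union_le _ _
      _ ≤ P G + ENNReal.ofReal δ := by gcongr
  rw [ENNReal.ofReal_sub _ hδ0.le, ENNReal.ofReal_one]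
  exact tsub_le_iff_right.2 hcover
end

section
/- (Empirical Rademacher complexity bound inside the proof of Theorem 1) Fix a sample S = {(x_i,y_i)}_{i=1}^m where each output set satisfies |Y(x_i)| ≤ r, and a feature map φ into ℝ^d. Let 𝒲 be the set of w ∈ ℝ^d with at most s nonzero coordinates, let β(m,w) > 0 be any positive temperature, and consider the loss class G = { (x,y) ↦ 1 − q(y; x, w) : w ∈ 𝒲 }. Then the empirical Rademacher complexity R̂_S(G) = E_σ[ sup_{w∈𝒲} (1/m) ∑_{i=1}^m σ_i (1 − q(y_i; x_i, w)) ], where σ₁,…,σ_m are i.i.d. uniform ±1 random variables, satisfies R̂_S(G) ≤ √( s(ln d + 2 ln(mr)) / m ). -/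
open Real Finset

open MeasureTheory

/-- A family of subsets of `P`, each cut out by requiring linear forms in a vector supported on `T`
to lie in fixed lower sets, has VC dimension at most the cardinality of `T`. -/
theorem vcDim_le_of_isLowerSet {P κ : Type*} [DecidableEq P] [Fintype κ]
    (a : P → κ → ℝ) (D : P → Set ℝ) (hD : ∀ p, IsLowerSet (D p)) (T : Finset κ)
    (𝒜 : Finset (Finset P))
    (h𝒜 : ∀ A ∈ 𝒜, ∃ w : κ → ℝ, (∀ j ∉ T, w j = 0) ∧ ∀ p, p ∈ A ↔ ∑ j, a p j * w j ∈ D p) :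
    𝒜.vcDim ≤ #T := by
  refine Finset.sup_le fun S hS ↦ ?_
  rw [mem_shatterer] at hS
  by_contra! hcard
  obtain ⟨f, hf, p₀, hp₀, hfp₀⟩ : ∃ f : P → ℝ,
      ∑ p ∈ S, f p • (fun j : T ↦ a p j) = 0 ∧ ∃ p ∈ S, f p ≠ 0 := by
    have hdep : ¬ LinearIndepOn ℝ (fun p (j : T) ↦ a p j) (S : Set P) := fun h ↦ by
      simpa [hcard.not_ge] using h.linearIndependent.fintype_card_le_finrank
    simpa [linearIndepOn_finset_iff] using hdep
  have hzero (w : κ → ℝ) (hw : ∀ j ∉ T, w j = 0) :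
      ∑ p ∈ S, f p * ∑ j, a p j * w j = 0 := by
    simp_rw [mul_sum]
    rw [sum_comm]
    refine sum_eq_zero fun j _ ↦ ?_
    by_cases hj : j ∈ T
    · have := congrFun hf ⟨j, hj⟩
      simp only [Finset.sum_apply, Pi.smul_apply, smul_eq_mul, Pi.zero_apply] at this
      simp_rw [← mul_assoc]
      rw [← sum_mul, this, zero_mul]
    · simp [hw j hj]
  obtain ⟨A, hA, hSA⟩ := hS (filter_subset (fun p ↦ 0 < f p) S)
  obtain ⟨B, hB, hSB⟩ := hS (filter_subset (fun p ↦ f p < 0) S)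
  obtain ⟨u, hu, hAu⟩ := h𝒜 A hA
  obtain ⟨v, hv, hBv⟩ := h𝒜 B hB
  have hAmem (p) (hp : p ∈ S) : ∑ j, a p j * u j ∈ D p ↔ 0 < f p := by
    rw [← hAu, ← and_iff_right (a := p ∈ S) (b := p ∈ A) hp, ← mem_inter, hSA]
    simp [hp]
  have hBmem (p) (hp : p ∈ S) : ∑ j, a p j * v j ∈ D p ↔ f p < 0 := by
    rw [← hBv, ← and_iff_right (a := p ∈ S) (b := p ∈ B) hp, ← mem_inter, hSB]
    simp [hp]
  have hpos (p) (hp : p ∈ S) (hfp : f p ≠ 0) :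
      f p * ∑ j, a p j * u j < f p * ∑ j, a p j * v j := by
    rcases hfp.lt_or_gt with h | h
    · refine mul_lt_mul_of_neg_left (lt_of_not_ge fun hle ↦ ?_) h
      exact h.not_gt ((hAmem p hp).1 (hD p hle ((hBmem p hp).2 h)))
    · refine mul_lt_mul_of_pos_left (lt_of_not_ge fun hle ↦ ?_) h
      exact h.not_gt ((hBmem p hp).1 (hD p hle ((hAmem p hp).2 h)))
  have hlt : ∑ p ∈ S, f p * ∑ j, a p j * u j < ∑ p ∈ S, f p * ∑ j, a p j * v j := by
    refine sum_lt_sum (fun p hp ↦ ?_) ⟨p₀, hp₀, hpos p₀ hp₀ hfp₀⟩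
    by_cases hfp : f p = 0
    · simp [hfp]
    · exact (hpos p hp hfp).le
  rw [hzero u hu, hzero v hv] at hlt
  exact hlt.false

theorem sum_choose_le_add_one_pow (n k : ℕ) : ∑ i ∈ Iic k, n.choose i ≤ (n + 1) ^ k := by
  rw [add_pow, Nat.range_succ_eq_Iic]
  refine sum_le_sum fun i hi ↦ ?_
  rw [one_pow, mul_one]
  exact (Nat.choose_le_pow n i).trans
    (Nat.le_mul_of_pos_right _ (Nat.choose_pos (mem_Iic.1 hi)))

/-- Number of patterns cut out by linear forms in `s`-sparse vectors lying in fixed lower sets. -/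
theorem card_le_of_sparse {P κ : Type*} [Fintype P] [DecidableEq P] [Fintype κ] [Nonempty κ]
    (a : P → κ → ℝ) (D : P → Set ℝ) (hD : ∀ p, IsLowerSet (D p)) (s : ℕ)
    (𝒜 : Finset (Finset P))
    (h𝒜 : ∀ A ∈ 𝒜, ∃ w : κ → ℝ, #{j | w j ≠ 0} ≤ s ∧ ∀ p, p ∈ A ↔ ∑ j, a p j * w j ∈ D p) :
    #𝒜 ≤ (Fintype.card κ * (Fintype.card P + 1)) ^ s := by
  classical
  set k := min s (Fintype.card κ)
  let ℬ (T : Finset κ) : Finset (Finset P) :=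
    {A ∈ 𝒜 | ∃ w : κ → ℝ, (∀ j ∉ T, w j = 0) ∧ ∀ p, p ∈ A ↔ ∑ j, a p j * w j ∈ D p}
  have hℬ (T) (hT : T ∈ powersetCard k (univ : Finset κ)) :
      #(ℬ T) ≤ (Fintype.card P + 1) ^ s := by
    have hdim : (ℬ T).vcDim ≤ k :=
      (vcDim_le_of_isLowerSet a D hD T _ fun A hA ↦ (mem_filter.1 hA).2).trans
        (mem_powersetCard.1 hT).2.le
    calc #(ℬ T) ≤ ∑ i ∈ Iic (ℬ T).vcDim, (Fintype.card P).choose i :=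
          (card_le_card_shatterer _).trans card_shatterer_le_sum_vcDim
      _ ≤ (Fintype.card P + 1) ^ (ℬ T).vcDim := sum_choose_le_add_one_pow _ _
      _ ≤ (Fintype.card P + 1) ^ s :=
          Nat.pow_le_pow_right (by simp) (hdim.trans (min_le_left _ _))
  have hsub : 𝒜 ⊆ (powersetCard k (univ : Finset κ)).biUnion ℬ := by
    intro A hA
    obtain ⟨w, hw, hAw⟩ := h𝒜 A hA
    obtain ⟨T, hT, hTk⟩ := exists_superset_card_eq (s := ({j | w j ≠ 0} : Finset κ)) (n := k)
      (le_min hw (card_le_univ _)) (min_le_right _ _)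
    refine mem_biUnion.2 ⟨T, mem_powersetCard.2 ⟨subset_univ _, hTk⟩,
      mem_filter.2 ⟨hA, w, fun j hj ↦ ?_, hAw⟩⟩
    by_contra h
    exact hj (hT (by simpa using h))
  calc #𝒜 ≤ #(powersetCard k (univ : Finset κ)) * (Fintype.card P + 1) ^ s :=
        (card_le_card hsub).trans (card_biUnion_le_card_mul _ _ _ hℬ)
    _ ≤ Fintype.card κ ^ s * (Fintype.card P + 1) ^ s := by
        gcongr
        rw [card_powersetCard, card_univ]
        exact (Nat.choose_le_pow _ _).trans
          (Nat.pow_le_pow_right Fintype.card_pos (min_le_left _ _))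
    _ = _ := (mul_pow _ _ _).symm

/-- The Rademacher sign encoded by a Boolean. -/
noncomputable def rademacherSign (b : Bool) : ℝ := if b then 1 else -1

theorem sum_exp_sum_rademacherSign_le {ι : Type*} [Fintype ι] [DecidableEq ι] (c t : ℝ) (x : ι → ℝ)
    (hx : ∀ i, |x i| ≤ c) :
    ∑ σ : ι → Bool, exp (t * ∑ i, rademacherSign (σ i) * x i) ≤
      2 ^ Fintype.card ι * exp (Fintype.card ι * c ^ 2 / 2 * (t * t)) := by
  have hfac : ∑ σ : ι → Bool, exp (t * ∑ i, rademacherSign (σ i) * x i) =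
      ∏ i, (2 * cosh (t * x i)) := by
    simp_rw [mul_sum, exp_sum]
    rw [← Fintype.prod_sum (fun i b ↦ exp (t * (rademacherSign b * x i)))]
    refine prod_congr rfl fun i _ ↦ ?_
    rw [Fintype.sum_bool, cosh_eq]
    simp only [rademacherSign, if_true, Bool.false_eq_true, if_false]
    ring_nf
  rw [hfac]
  calc ∏ i, (2 * cosh (t * x i)) ≤ ∏ _i : ι, (2 * exp (c ^ 2 / 2 * (t * t))) := by
        refine prod_le_prod (fun i _ ↦ by positivity) fun i _ ↦ ?_
        gcongr
        refine (cosh_le_exp_half_sq _).trans (exp_le_exp.2 ?_)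
        have := mul_le_mul_of_nonneg_right (sq_le_sq' (abs_le.1 (hx i)).1 (abs_le.1 (hx i)).2)
          (mul_self_nonneg t)
        linarith
    _ = _ := by
        rw [prod_const, mul_pow, ← exp_nat_mul, card_univ]
        ring_nf

/-- **Massart's finite class lemma**, for a selection of class members depending on the signs. -/
theorem sum_rademacherSign_mul_le {ι : Type*} [Fintype ι] [DecidableEq ι] (c : ℝ) (hc : 0 ≤ c)
    (V : Finset (ι → ℝ)) (N : ℝ) (hN : #V ≤ N) (hV : ∀ x ∈ V, ∀ i, |x i| ≤ c)
    (x : (ι → Bool) → ι → ℝ) (hx : ∀ σ, x σ ∈ V) :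
    ∑ σ, ∑ i, rademacherSign (σ i) * x σ i ≤
      2 ^ Fintype.card ι * (c * √(2 * Fintype.card ι * log N)) := by
  set M : ℝ := 2 ^ Fintype.card ι with hM
  have hM0 : 0 < M := by positivity
  have hV1 : (1 : ℝ) ≤ #V := by
    exact_mod_cast card_pos.2 ⟨x (fun _ ↦ true), hx _⟩
  have hN1 : 1 ≤ N := hV1.trans hN
  set Z : (ι → Bool) → ℝ := fun σ ↦ ∑ i, rademacherSign (σ i) * x σ i
  set E : ℝ := ∑ σ, M⁻¹ * Z σ with hE
  have hweight : ∑ _σ : ι → Bool, M⁻¹ = 1 := by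
    simp [hM]
  have key (t : ℝ) : t * E ≤ log N + Fintype.card ι * c ^ 2 / 2 * (t * t) := by
    have hjensen : exp (t * E) ≤ ∑ σ, M⁻¹ * exp (t * Z σ) := by
      have := convexOn_exp.map_sum_le (t := (univ : Finset (ι → Bool))) (w := fun _ ↦ M⁻¹)
        (p := fun σ ↦ t * Z σ) (fun _ _ ↦ by positivity) hweight (fun _ _ ↦ Set.mem_univ _)
      simp only [smul_eq_mul] at this
      rwa [show t * E = ∑ σ, M⁻¹ * (t * Z σ) by
        rw [hE, mul_sum]; exact sum_congr rfl fun _ _ ↦ by ring]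
    have hunion : ∑ σ, exp (t * Z σ) ≤
        ∑ y ∈ V, ∑ σ : ι → Bool, exp (t * ∑ i, rademacherSign (σ i) * y i) := by
      rw [sum_comm]
      exact sum_le_sum fun σ _ ↦ single_le_sum
        (f := fun y : ι → ℝ ↦ exp (t * ∑ i, rademacherSign (σ i) * y i))
        (fun _ _ ↦ (exp_pos _).le) (hx σ)
    have hmgf : ∑ y ∈ V, ∑ σ : ι → Bool, exp (t * ∑ i, rademacherSign (σ i) * y i) ≤
        N * (M * exp (Fintype.card ι * c ^ 2 / 2 * (t * t))) := by
      refine (sum_le_card_nsmul _ _ _ fun y hy ↦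
        sum_exp_sum_rademacherSign_le c t y (hV y hy)).trans ?_
      rw [nsmul_eq_mul]
      gcongr
    rw [← mul_sum] at hjensen
    have hexp : exp (t * E) ≤ N * exp (Fintype.card ι * c ^ 2 / 2 * (t * t)) := by
      refine hjensen.trans ((inv_mul_le_iff₀ hM0).2 ((hunion.trans hmgf).trans_eq ?_))
      ring
    have hN0 : 0 < N := by linarith
    rw [← exp_le_exp, exp_add, exp_log hN0]
    exact hexp
  have hdisc := discrim_le_zero (a := Fintype.card ι * c ^ 2 / 2) (b := -E) (c := log N)
    fun t ↦ by linarith [key t]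
  rw [discrim] at hdisc
  have hEle : E ≤ c * √(2 * Fintype.card ι * log N) := by
    have hsqrt : c * √(2 * Fintype.card ι * log N) =
        √(c ^ 2 * (2 * Fintype.card ι * log N)) := by
      rw [sqrt_mul (sq_nonneg c), sqrt_sq hc]
    rw [hsqrt]
    exact le_sqrt_of_sq_le (by linarith)
  rw [hE, ← mul_sum] at hEle
  exact (inv_mul_le_iff₀ hM0).1 hEle

theorem sum_rademacherSign {ι : Type*} [Fintype ι] [DecidableEq ι] (i : ι) :
    ∑ σ : ι → Bool, rademacherSign (σ i) = 0 := by
  let e : (ι → Bool) ≃ (ι → Bool) := Equiv.piCongrRight fun _ ↦ Equiv.boolNot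
  have h := Equiv.sum_comp e fun σ : ι → Bool ↦ rademacherSign (σ i)
  have hneg (σ : ι → Bool) : rademacherSign (e σ i) = -rademacherSign (σ i) := by
    cases hσ : σ i <;> simp [e, rademacherSign, hσ]
  simp_rw [hneg, sum_neg_distrib] at h
  linarith

section SparseLinear

variable {ι P κ : Type*} [Fintype ι] [DecidableEq ι] [Fintype P] [Fintype κ] [Nonempty κ]

open scoped Classical in
theorem sum_rademacherSign_indicator_le (a : P → κ → ℝ) (D : P → Set ℝ)
    (hD : ∀ p, IsLowerSet (D p)) (s : ℕ) (Q : ι → Finset P) (w : (ι → Bool) → κ → ℝ)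
    (hw : ∀ σ, #{j | w σ j ≠ 0} ≤ s) :
    ∑ σ, ∑ i, rademacherSign (σ i) *
        (1 - if ∀ p ∈ Q i, ∑ j, a p j * w σ j ∈ D p then 1 else 0) ≤
      2 ^ Fintype.card ι * (1 / 2 * √(2 * Fintype.card ι *
        log ((Fintype.card κ * (Fintype.card P + 1)) ^ s))) := by
  let A (σ : ι → Bool) : Finset P := {p | ∑ j, a p j * w σ j ∈ D p}
  let pattern (B : Finset P) (i : ι) : ℝ := 1 / 2 - if Q i ⊆ B then 1 else 0
  have hcard : #((univ.image A).image pattern) ≤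
      ((Fintype.card κ * (Fintype.card P + 1)) ^ s : ℝ) := by
    exact_mod_cast card_image_le.trans (card_le_of_sparse a D hD s (univ.image A) fun B hB ↦ by
      obtain ⟨σ, -, rfl⟩ := mem_image.1 hB
      exact ⟨w σ, by convert hw σ, fun p ↦ by simp [A]⟩)
  have hmassart := sum_rademacherSign_mul_le (1 / 2) (by norm_num)
    ((univ.image A).image pattern) _ hcard (fun x hx i ↦ by
      obtain ⟨B, -, rfl⟩ := mem_image.1 hx
      simp only [pattern]
      split_ifs <;> norm_num [abs_le])
    (fun σ ↦ pattern (A σ)) fun σ ↦ mem_image_of_mem _ (mem_image_of_mem _ (mem_univ σ))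
  refine Eq.trans_le ?_ hmassart
  have hhalf : ∑ σ : ι → Bool, ∑ i, rademacherSign (σ i) * (1 / 2) = 0 := by
    rw [sum_comm]
    exact sum_eq_zero fun i _ ↦ by rw [← sum_mul, sum_rademacherSign, zero_mul]
  rw [← sub_eq_zero, ← sum_sub_distrib]
  refine Eq.trans ?_ hhalf
  refine sum_congr rfl fun σ _ ↦ ?_
  rw [← sum_sub_distrib]
  refine sum_congr rfl fun i _ ↦ ?_
  have hiff : Q i ⊆ A σ ↔ ∀ p ∈ Q i, ∑ j, a p j * w σ j ∈ D p := by
    simp [A, subset_iff]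
  simp only [pattern, hiff]
  ring

theorem sum_rademacherSign_integral_le {Ω : Type*} [MeasurableSpace Ω] (μ : Measure Ω)
    [IsProbabilityMeasure μ] (q : (ι → Bool) → ι → Ω → ℝ) (hq : ∀ σ i, Integrable (q σ i) μ)
    (C : ℝ) (hC : ∀ ω, ∑ σ, ∑ i, rademacherSign (σ i) * (1 - q σ i ω) ≤ C) :
    ∑ σ, ∑ i, rademacherSign (σ i) * (1 - ∫ ω, q σ i ω ∂μ) ≤ C := by
  have hint (σ i) : Integrable (fun ω ↦ rademacherSign (σ i) * (1 - q σ i ω)) μ :=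
    ((integrable_const 1).sub (hq σ i)).const_mul _
  calc ∑ σ, ∑ i, rademacherSign (σ i) * (1 - ∫ ω, q σ i ω ∂μ)
      = ∫ ω, ∑ σ, ∑ i, rademacherSign (σ i) * (1 - q σ i ω) ∂μ := by
        rw [integral_finsetSum _ fun σ _ ↦ integrable_finsetSum _ fun i _ ↦ hint σ i]
        refine sum_congr rfl fun σ _ ↦ ?_
        rw [integral_finsetSum _ fun i _ ↦ hint σ i]
        refine sum_congr rfl fun i _ ↦ ?_
        rw [integral_const_mul, integral_sub (integrable_const 1) (hq σ i)]
        simp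
    _ ≤ ∫ _, C ∂μ := integral_mono
        (integrable_finsetSum _ fun σ _ ↦ integrable_finsetSum _ fun i _ ↦ hint σ i)
        (integrable_const C) hC
    _ = C := by simp

theorem sum_rademacherSign_prod_le (a : P → κ → ℝ) (g : ℝ → unitInterval) (hg : Antitone g)
    (s : ℕ) (Q : ι → Finset P) (w : (ι → Bool) → κ → ℝ) (hw : ∀ σ, #{j | w σ j ≠ 0} ≤ s) :
    ∑ σ, ∑ i, rademacherSign (σ i) *
        (1 - ∏ p ∈ Q i, (g (∑ j, a p j * w σ j) : ℝ)) ≤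
      2 ^ Fintype.card ι * (1 / 2 * √(2 * Fintype.card ι *
        log ((Fintype.card κ * (Fintype.card P + 1)) ^ s))) := by
  classical
  let S (σ : ι → Bool) (i : ι) : Set (P → unitInterval) :=
    Set.univ.pi fun p ↦ if p ∈ Q i then Set.Iic (g (∑ j, a p j * w σ j)) else Set.univ
  have hS (σ i) : MeasurableSet (S σ i) := by
    refine MeasurableSet.univ_pi fun p ↦ ?_
    split_ifs
    exacts [measurableSet_Iic, MeasurableSet.univ]
  have hvol (σ i) : ∫ U, (S σ i).indicator 1 U =
      ∏ p ∈ Q i, (g (∑ j, a p j * w σ j) : ℝ) := by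
    rw [integral_indicator_one (hS σ i), Measure.real, volume_pi_pi, ENNReal.toReal_prod,
      ← prod_subset (subset_univ (Q i))]
    · refine prod_congr rfl fun p hp ↦ ?_
      rw [if_pos hp, unitInterval.volume_Iic, ENNReal.toReal_ofReal (g _).2.1]
    · intro p _ hp
      simp [hp]
  simp_rw [← hvol]
  refine sum_rademacherSign_integral_le volume _
    (fun σ i ↦ (integrable_const (1 : ℝ)).indicator (hS σ i)) _ fun U ↦ ?_
  refine Eq.trans_le ?_ (sum_rademacherSign_indicator_le a (fun p ↦ {z | U p ≤ g z})
    (fun p z z' hz hU ↦ le_trans hU (hg hz)) s Q w hw)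
  refine sum_congr rfl fun σ _ ↦ sum_congr rfl fun i _ ↦ ?_
  have hiff : U ∈ S σ i ↔ ∀ p ∈ Q i, U p ≤ g (∑ j, a p j * w σ j) := by
    simp only [S, Set.mem_univ_pi]
    refine forall_congr' fun p ↦ ?_
    split_ifs with h <;> simp [h]
  simp [Set.indicator_apply, hiff]

theorem integral_unitInterval_rpow {c : ℝ} (hc : 0 ≤ c) :
    ∫ u : unitInterval, (u : ℝ) ^ c = (1 + c)⁻¹ := by
  rw [unitInterval.volume_def, integral_subtype_comap measurableSet_Icc (fun u : ℝ ↦ u ^ c),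
    integral_Icc_eq_integral_Ioc, ← intervalIntegral.integral_of_le zero_le_one,
    integral_rpow (Or.inl (by linarith)), one_rpow, zero_rpow (by linarith), sub_zero, one_div,
    add_comm]

theorem sum_rademacherSign_softmax_le (a : P → κ → ℝ) (s : ℕ) (Q : ι → Finset P)
    (w : (ι → Bool) → κ → ℝ) (hw : ∀ σ, #{j | w σ j ≠ 0} ≤ s) :
    ∑ σ, ∑ i, rademacherSign (σ i) *
        (1 - (1 + ∑ p ∈ Q i, exp (∑ j, a p j * w σ j))⁻¹) ≤
      2 ^ Fintype.card ι * (1 / 2 * √(2 * Fintype.card ι *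
        log ((Fintype.card κ * (Fintype.card P + 1)) ^ s))) := by
  have hnonneg (σ i) : 0 ≤ ∑ p ∈ Q i, exp (∑ j, a p j * w σ j) :=
    sum_nonneg fun _ _ ↦ (exp_pos _).le
  simp_rw [← fun σ i ↦ integral_unitInterval_rpow (hnonneg σ i)]
  refine sum_rademacherSign_integral_le volume _ (fun σ i ↦ ?_) _ fun u ↦ ?_
  · have hcont : Continuous fun u : unitInterval ↦
        (u : ℝ) ^ ∑ p ∈ Q i, exp (∑ j, a p j * w σ j) :=
      continuous_subtype_val.rpow_const fun _ ↦ Or.inr (hnonneg σ i)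
    exact hcont.integrable_of_hasCompactSupport (HasCompactSupport.of_compactSpace _)
  · let g (z : ℝ) : unitInterval :=
      ⟨(u : ℝ) ^ exp z, rpow_nonneg u.2.1 _, rpow_le_one u.2.1 u.2.2 (exp_pos z).le⟩
    have hg : Antitone g := fun z z' hz ↦ Subtype.coe_le_coe.1
      (rpow_le_rpow_of_exponent_ge_of_imp u.2.1 u.2.2 (exp_le_exp.2 hz)
        fun _ h ↦ absurd h (exp_pos z').ne')
    refine Eq.trans_le ?_ (sum_rademacherSign_prod_le a g hg s Q w hw)
    refine sum_congr rfl fun σ _ ↦ sum_congr rfl fun i _ ↦ ?_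
    rw [rpow_sum_of_nonneg u.2.1 fun _ _ ↦ (exp_pos _).le]

end SparseLinear

theorem softmaxProb_eq_inv_one_add_sum {Y : Type*} [Fintype Y] [DecidableEq Y] {d : ℕ}
    (φ : Y → Fin d → ℝ) (w : Fin d → ℝ) (b : ℝ) (y₀ : Y) :
    softmaxProb (linScore φ w) b univ y₀ =
      (1 + ∑ y : {y // y ≠ y₀}, exp (∑ j, (φ y j - φ y₀ j) * (w j / b)))⁻¹ := by
  have hterm (y : Y) : exp (∑ j, (φ y j - φ y₀ j) * (w j / b)) =
      exp (linScore φ w y / b) / exp (linScore φ w y₀ / b) := by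
    rw [← exp_sub, ← sub_div, linScore, linScore, ← sum_sub_distrib, sum_div]
    congr 1
    exact sum_congr rfl fun j _ ↦ by ring
  rw [softmaxProb, ← inv_div, inv_inj, ← add_sum_erase _ _ (mem_univ y₀), add_div,
    div_self (exp_pos _).ne', sum_div, ← sum_subtype (univ.erase y₀) (by simp)
      fun y ↦ exp (∑ j, (φ y j - φ y₀ j) * (w j / b))]
  simp_rw [hterm]

/-- A bound on all sums over selections from nonempty sets bounds the sum of their suprema. -/
theorem sum_sSup_le_of_forall_selection {α : Type*} [Fintype α] (S : α → Set ℝ)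
    (hS : ∀ x, (S x).Nonempty) (C : ℝ) (hC : ∀ v : α → ℝ, (∀ x, v x ∈ S x) → ∑ x, v x ≤ C) :
    ∑ x, sSup (S x) ≤ C := by
  refine le_of_forall_pos_le_add fun ε hε ↦ ?_
  obtain ⟨δ, hδ, hδε⟩ : ∃ δ > 0, Fintype.card α * δ ≤ ε :=
    ⟨ε / (Fintype.card α + 1), by positivity, by
      rw [mul_div_assoc', div_le_iff₀ (by positivity)]; nlinarith⟩
  choose v hv hlt using fun x ↦ exists_lt_of_lt_csSup (hS x) (sub_lt_self (sSup (S x)) hδ)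
  calc ∑ x, sSup (S x) ≤ ∑ x, (v x + δ) := sum_le_sum fun x _ ↦ by linarith [hlt x]
    _ ≤ C + ε := by
        rw [sum_add_distrib, sum_const, card_univ, nsmul_eq_mul]
        exact add_le_add (hC v hv) hδε

/-- **Empirical Rademacher complexity bound in the proof of Theorem 1.**
The empirical Rademacher complexity of the CRF loss class over `s`-sparse
weight vectors, written as an average over all `2^m` sign vectors of the supremum
of the signed empirical loss, is at most `√(s(ln d + 2 ln(mr))/m)`. -/
theorem empirical_rademacher_complexity_bound
    (m d s r : ℕ) (hm : 0 < m) (hd : 0 < d) (hr : 0 < r)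
    (Y : Fin m → Type*) [∀ i, Fintype (Y i)] [∀ i, Nonempty (Y i)]
    (hcard : ∀ i, Fintype.card (Y i) ≤ r)
    (yobs : ∀ i, Y i)
    (φ : ∀ i, Y i → Fin d → ℝ)
    (β : (Fin d → ℝ) → ℝ) (hβ : ∀ w, 0 < β w) :
    ((1 : ℝ) / 2 ^ m) * ∑ σ : Fin m → Bool,
        sSup {v : ℝ | ∃ w : Fin d → ℝ,
          (Finset.univ.filter fun j => w j ≠ 0).card ≤ s ∧
          v = (1 / (m : ℝ)) * ∑ i, (if σ i then (1 : ℝ) else -1) *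
            (1 - softmaxProb (linScore (φ i) w) (β w) Finset.univ (yobs i))}
      ≤ Real.sqrt ((s : ℝ) * (Real.log d + 2 * Real.log (m * r)) / m) := by
  classical
  have : Nonempty (Fin d) := ⟨⟨0, hd⟩⟩
  have hm0 : (0 : ℝ) < m := by exact_mod_cast hm
  let P := Σ i, {y : Y i // y ≠ yobs i}
  have hP : Fintype.card P + 1 ≤ m * r := by
    have hle : Fintype.card P ≤ m * (r - 1) := by
      rw [Fintype.card_sigma]
      refine (sum_le_card_nsmul univ _ (r - 1) fun i _ ↦ ?_).trans_eq (by simp)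
      rw [Fintype.card_subtype_compl, Fintype.card_subtype_eq]
      exact Nat.sub_le_sub_right (hcard i) 1
    obtain ⟨k, rfl⟩ := Nat.exists_eq_add_of_lt hr
    simp only [zero_add, Nat.add_sub_cancel] at hle ⊢
    rw [mul_add, mul_one]
    omega
  have hlog : log (((Fintype.card (Fin d) : ℝ) * (Fintype.card P + 1)) ^ s) ≤
      2 * (s * (log d + 2 * log (m * r))) := by
    have hmr : (Fintype.card P + 1 : ℝ) ≤ m * r := by exact_mod_cast hP
    have hd1 : 0 ≤ log d := log_natCast_nonneg d
    have hmr1 : 0 ≤ log (m * r : ℝ) := log_nonneg (le_trans (by simp) hmr)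
    rw [log_pow, Fintype.card_fin, log_mul (by positivity) (by positivity)]
    have hmono := log_le_log (by positivity) hmr
    nlinarith [Nat.cast_nonneg (α := ℝ) s]
  rw [one_div, inv_mul_le_iff₀ (by positivity)]
  apply sum_sSup_le_of_forall_selection
  · exact fun σ ↦ ⟨_, 0, by simp, rfl⟩
  intro v hv
  choose w hw hvw using hv
  have hmain := sum_rademacherSign_softmax_le
    (fun (p : P) j ↦ φ p.1 p.2 j - φ p.1 (yobs p.1) j) s
    (fun i ↦ univ.map (Function.Embedding.sigmaMk i)) (fun σ j ↦ w σ j / β (w σ))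
    fun σ ↦ by simpa [(hβ (w σ)).ne'] using hw σ
  simp only [sum_map, Fintype.card_fin m] at hmain
  calc ∑ σ, v σ
      = 1 / m * ∑ σ : Fin m → Bool, ∑ i, rademacherSign (σ i) *
          (1 - (1 + ∑ y : {y // y ≠ yobs i},
            exp (∑ j, (φ i y j - φ i (yobs i) j) * (w σ j / β (w σ))))⁻¹) := by
        rw [mul_sum]
        refine sum_congr rfl fun σ _ ↦ ?_
        simp only [hvw, softmaxProb_eq_inv_one_add_sum, rademacherSign]
    _ ≤ 1 / m * (2 ^ m * (1 / 2 * √(2 * m * (2 * (s * (log d + 2 * log (m * r))))))) := by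
        gcongr
        refine hmain.trans ?_
        gcongr
    _ = 2 ^ m * √(s * (log d + 2 * log (m * r)) / m) := by
        rw [show 2 * m * (2 * (s * (log d + 2 * log (m * r)))) =
            (2 * m : ℝ) ^ 2 * (s * (log d + 2 * log (m * r)) / m) by field_simp,
          sqrt_mul (by positivity), sqrt_sq (by positivity)]
        field_simp
end
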